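/- Let κ > 0 and let U ⊆ ℝ² be an open connected set whose complement K = ℝ² \ U is compact. Let D ⊂ ℝ² be a bounded open domain whose boundary Γ = ∂D is connected and real-analytic, with closure(D) = D ∪ Γ ⊆ U, and assume κ is not a Dirichlet eigenvalue for D. Let Λ be a nonempty relatively open subset of Γ. If ψ₁ and ψ₂ are radiation solutions on U such that Im ψ₁(x) = Im ψ₂(x) for all x ∈ Λ, then ψ₁(x) = ψ₂(x) for all x ∈ U. -/

import Mathlib

noncomputable section

open Real MeasureTheory Set

/-- The plane `ℝ²`. -/
abbrev R2 : Type := EuclideanSpace ℝ (Fin 2)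

/-- The Laplacian of a complex-valued function on `ℝ²`, as the sum of the second
derivatives along the standard coordinate directions. -/
def laplacian2 (f : R2 → ℂ) (x : R2) : ℂ :=
  ∑ i : Fin 2,
    fderiv ℝ (fun y => fderiv ℝ f y (EuclideanSpace.single i 1)) x (EuclideanSpace.single i 1)

/-- `ψ` is a radiation solution of the Helmholtz equation `Δψ + κ²ψ = 0` on `U`:
it is `C²` on `U`, satisfies the Helmholtz equation on `U`, and satisfies the
Sommerfeld radiation condition
`√|x| (∂ψ/∂|x| − iκψ)(x) → 0` as `|x| → ∞`, uniformly in `x/|x|`. -/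
def IsRadiationSolution (κ : ℝ) (U : Set R2) (ψ : R2 → ℂ) : Prop :=
  ContDiffOn ℝ 2 ψ U ∧
  (∀ x ∈ U, laplacian2 ψ x + (κ : ℂ) ^ 2 * ψ x = 0) ∧
  ∀ ε > 0, ∃ R > 0, ∀ x ∈ U, R ≤ ‖x‖ →
    ‖((Real.sqrt ‖x‖ : ℂ) *
      (fderiv ℝ ψ x (‖x‖⁻¹ • x) - Complex.I * (κ : ℂ) * ψ x))‖ < ε

/-- `Γ` is a real-analytic closed curve in `ℝ²`: the image of a real-analytic
`2π`-periodic map `γ : ℝ → ℝ²` with non-vanishing derivative, injective on `[0, 2π)`. -/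
def IsRealAnalyticClosedCurve (Γ : Set R2) : Prop :=
  ∃ γ : ℝ → R2, (∀ t : ℝ, AnalyticAt ℝ γ t) ∧ Function.Periodic γ (2 * π) ∧
    (∀ t : ℝ, deriv γ t ≠ 0) ∧ Set.InjOn γ (Set.Ico 0 (2 * π)) ∧ Γ = Set.range γ

/-- `κ` is not a Dirichlet eigenvalue for the bounded open set `D`: every function
continuous on `closure D`, `C²` on `D`, satisfying `Δu + κ²u = 0` on `D` and
vanishing on `∂D`, vanishes identically on `D`. -/
def NotDirichletEigenvalue (κ : ℝ) (D : Set R2) : Prop :=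
  ∀ u : R2 → ℂ, ContinuousOn u (closure D) → ContDiffOn ℝ 2 u D →
    (∀ x ∈ D, laplacian2 u x + (κ : ℂ) ^ 2 * u x = 0) →
    (∀ x ∈ frontier D, u x = 0) → ∀ x ∈ D, u x = 0

open Filter Topology

/-- The monomial `z ^ n * s ^ (m - n)` on `ℂ × ℂ` as an `m`-linear map. -/
def pairMonomial (m n : ℕ) : ContinuousMultilinearMap ℂ (fun _ : Fin m => ℂ × ℂ) ℂ :=
  (ContinuousMultilinearMap.mkPiAlgebra ℂ (Fin m) ℂ).compContinuousLinearMap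
    (fun i => if (i : ℕ) < n then ContinuousLinearMap.fst ℂ ℂ ℂ else ContinuousLinearMap.snd ℂ ℂ ℂ)

lemma norm_pairMonomial_le (m n : ℕ) : ‖pairMonomial m n‖ ≤ 1 := by
  refine (ContinuousMultilinearMap.norm_compContinuousLinearMap_le _ _).trans ?_
  rw [ContinuousMultilinearMap.norm_mkPiAlgebra, one_mul]
  refine Finset.prod_le_one (fun _ _ => norm_nonneg _) (fun i _ => ?_)
  split_ifs
  · exact ContinuousLinearMap.norm_fst_le ..
  · exact ContinuousLinearMap.norm_snd_le ..

lemma pairMonomial_apply_diag (n k : ℕ) (y : ℂ × ℂ) :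
    pairMonomial (n + k) n (fun _ => y) = y.1 ^ n * y.2 ^ k := by
  simp only [pairMonomial, ContinuousMultilinearMap.compContinuousLinearMap_apply,
    ContinuousMultilinearMap.mkPiAlgebra_apply]
  rw [Fin.prod_univ_add]
  simp

/-- A double power series with geometrically bounded coefficients is analytic at the origin. -/
theorem analyticAt_doublePowerSeries {c : ℕ → ℕ → ℂ} {C A : ℝ} (hA : 0 < A)
    (hc : ∀ n k, ‖c n k‖ ≤ C * A ^ n * A ^ k) :
    AnalyticAt ℂ (fun y : ℂ × ℂ => ∑' n, ∑' k, c n k * y.1 ^ n * y.2 ^ k) 0 := by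
  have hC : 0 ≤ C := by simpa using (norm_nonneg _).trans (hc 0 0)
  let p : FormalMultilinearSeries ℂ (ℂ × ℂ) ℂ := fun m =>
    ∑ ij ∈ Finset.HasAntidiagonal.antidiagonal m, c ij.1 ij.2 • pairMonomial m ij.1
  have hp : ∀ m, ‖p m‖ ≤ C * (2 * A) ^ m := by
    intro m
    have h1 : ‖p m‖ ≤ ∑ ij ∈ Finset.HasAntidiagonal.antidiagonal m, C * A ^ m := by
      refine norm_sum_le_of_le _ (fun ij hij => ?_)
      rw [norm_smul]
      have := hc ij.1 ij.2
      rw [mul_assoc, ← pow_add, Finset.HasAntidiagonal.mem_antidiagonal.1 hij] at this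
      calc _ ≤ C * A ^ m * 1 :=
            mul_le_mul this (norm_pairMonomial_le _ _) (norm_nonneg _) (by positivity)
        _ = _ := mul_one _
    refine h1.trans ?_
    rw [Finset.sum_const, Finset.Nat.card_antidiagonal, nsmul_eq_mul, mul_pow]
    have h2 : ((m + 1 : ℕ) : ℝ) ≤ 2 ^ m := by exact_mod_cast Nat.lt_two_pow_self
    have : 0 ≤ C * A ^ m := by positivity
    nlinarith
  refine ⟨p, ENNReal.ofReal (1 / (2 * A)), ?_, ?_, ?_⟩
  · refine p.le_radius_of_bound C (r := Real.toNNReal (1 / (2 * A))) (fun m => ?_)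
    rw [Real.coe_toNNReal _ (by positivity)]
    calc ‖p m‖ * (1 / (2 * A)) ^ m ≤ C * (2 * A) ^ m * (1 / (2 * A)) ^ m := by
          gcongr; exact hp m
      _ = C := by rw [mul_assoc, ← mul_pow, mul_one_div_cancel (by positivity)]; simp
  · simpa using hA
  · intro y hy
    rw [zero_add]
    have hy' : ‖y‖ < 1 / (2 * A) := by
      rw [Metric.mem_eball, edist_zero_right] at hy
      rw [← ofReal_norm] at hy
      exact (ENNReal.ofReal_lt_ofReal_iff (by positivity)).1 hy
    have hAy : A * ‖y‖ < 1 := by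
      rw [lt_div_iff₀ (by positivity)] at hy'
      nlinarith [norm_nonneg y]
    have hgeo := summable_geometric_of_lt_one (by positivity) hAy
    have hsum : Summable (fun q : ℕ × ℕ => c q.1 q.2 * y.1 ^ q.1 * y.2 ^ q.2) := by
      refine Summable.of_norm_bounded
        (g := fun q : ℕ × ℕ => C * ((A * ‖y‖) ^ q.1 * (A * ‖y‖) ^ q.2)) ?_ ?_
      · exact (hgeo.mul_of_nonneg hgeo (fun _ => by positivity) (fun _ => by positivity)).mul_left C
      · rintro ⟨n, k⟩
        simp only [norm_mul, norm_pow]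
        calc ‖c n k‖ * ‖y.1‖ ^ n * ‖y.2‖ ^ k ≤ (C * A ^ n * A ^ k) * ‖y‖ ^ n * ‖y‖ ^ k := by
              gcongr
              · exact hc n k
              · exact norm_fst_le y
              · exact norm_snd_le y
          _ = _ := by ring
    have h1 := hsum.hasSum
    rw [hsum.tsum_prod] at h1
    rw [← Finset.HasAntidiagonal.sigmaAntidiagonalEquivProd.hasSum_iff] at h1
    refine (h1.sigma (g := fun m => p m (fun _ => y)) (fun m => ?_))
    have h2 := hasSum_fintype (fun q : ↥(Finset.HasAntidiagonal.antidiagonal m) =>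
      c q.1.1 q.1.2 * y.1 ^ q.1.1 * y.2 ^ q.1.2)
    change HasSum (fun q : ↥(Finset.HasAntidiagonal.antidiagonal m) =>
      c q.1.1 q.1.2 * y.1 ^ q.1.1 * y.2 ^ q.1.2) _
    convert h2 using 1
    rw [Finset.sum_coe_sort (Finset.HasAntidiagonal.antidiagonal m)
      (fun q : ℕ × ℕ => c q.1 q.2 * y.1 ^ q.1 * y.2 ^ q.2)]
    simp only [p, sum_apply, smul_apply]
    refine Finset.sum_congr rfl (fun ij hij => ?_)
    rw [← Finset.HasAntidiagonal.mem_antidiagonal.1 hij, pairMonomial_apply_diag, smul_eq_mul, mul_assoc]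

/-- A continuous `2π`-periodic function with summable Fourier coefficients is the sum of its
Fourier series. -/
theorem hasSum_fourier_of_periodic {w : ℝ → ℂ} (hw : Continuous w)
    (hper : Function.Periodic w (2 * π))
    (hs : Summable fun n : ℤ => ∫ θ in (0 : ℝ)..2 * π, w θ * Complex.exp (-(n * θ * Complex.I)))
    (θ : ℝ) :
    HasSum (fun n : ℤ => (1 / (2 * π) : ℂ) *
      (∫ θ in (0 : ℝ)..2 * π, w θ * Complex.exp (-(n * θ * Complex.I))) *
        Complex.exp (n * θ * Complex.I)) (w θ) := by
  have : Fact (0 < 2 * π) := ⟨by positivity⟩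
  have hcont : Continuous hper.lift := by
    exact continuous_coinduced_dom.2 hw
  let f : C(AddCircle (2 * π), ℂ) := ⟨hper.lift, hcont⟩
  have hpi : (π : ℂ) ≠ 0 := by exact_mod_cast Real.pi_ne_zero
  have hexp : ∀ (n : ℤ) (x : ℝ), (2 * π * Complex.I * n * x / ((2 * π : ℝ) : ℂ))
      = n * x * Complex.I := by
    intro n x
    push_cast
    field_simp
  have hcoef : ∀ n : ℤ, fourierCoeff f n = (1 / (2 * π) : ℂ) *
      ∫ θ in (0 : ℝ)..2 * π, w θ * Complex.exp (-(n * θ * Complex.I)) := by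
    intro n
    rw [fourierCoeff_eq_intervalIntegral _ _ 0, zero_add, Complex.real_smul]
    push_cast
    congr 1
    refine intervalIntegral.integral_congr (fun x _ => ?_)
    simp only [fourier_coe_apply, hexp, smul_eq_mul]
    rw [mul_comm]
    congr 2
    push_cast
    ring
  have h := has_pointwise_sum_fourier_series_of_summable (f := f)
    (by rw [funext hcoef]; exact hs.mul_left _) (θ : AddCircle (2 * π))
  refine h.congr_fun ?_
  intro n
  rw [hcoef, fourier_coe_apply, hexp, smul_eq_mul]

/-- Differentiation under the integral sign over a period. -/
theorem hasDerivAt_integral_period {a b : ℝ} {Φ Φ' : ℝ → ℝ → ℂ}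
    (hΦ : ContinuousOn (fun q : ℝ × ℝ => Φ q.1 q.2) (Ioo a b ×ˢ univ))
    (hΦ' : ContinuousOn (fun q : ℝ × ℝ => Φ' q.1 q.2) (Ioo a b ×ˢ univ))
    (hd : ∀ r ∈ Ioo a b, ∀ θ, HasDerivAt (fun ρ => Φ ρ θ) (Φ' r θ) r) {r : ℝ}
    (hr : r ∈ Ioo a b) :
    HasDerivAt (fun ρ => ∫ θ in (0 : ℝ)..2 * π, Φ ρ θ) (∫ θ in (0 : ℝ)..2 * π, Φ' r θ) r := by
  obtain ⟨δ, hδ, hsub⟩ := Metric.nhds_basis_closedBall.mem_iff.1 (Ioo_mem_nhds hr.1 hr.2)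
  have hcpt : IsCompact (Metric.closedBall r δ ×ˢ Icc (0 : ℝ) (2 * π)) :=
    (isCompact_closedBall r δ).prod isCompact_Icc
  obtain ⟨M, hM⟩ := hcpt.exists_bound_of_continuousOn
    (hΦ'.mono (prod_mono hsub (subset_univ _)))
  have slice : ∀ {Ψ : ℝ → ℝ → ℂ},
      ContinuousOn (fun q : ℝ × ℝ => Ψ q.1 q.2) (Ioo a b ×ˢ univ) → ∀ ρ ∈ Ioo a b,
      Continuous (Ψ ρ) := by
    intro Ψ hΨ ρ hρ
    exact hΨ.comp_continuous (f := fun θ : ℝ => (ρ, θ)) (by fun_prop) (fun θ => ⟨hρ, trivial⟩)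
  refine (intervalIntegral.hasDerivAt_integral_of_dominated_loc_of_deriv_le
    (F := Φ) (F' := Φ') (bound := fun _ => M)
    (Metric.closedBall_mem_nhds r hδ) ?_ ?_ ?_ ?_ ?_ ?_).2
  · filter_upwards [Ioo_mem_nhds hr.1 hr.2] with ρ hρ
    exact (slice hΦ ρ hρ).aestronglyMeasurable
  · exact (slice hΦ r hr).intervalIntegrable _ _
  · exact (slice hΦ' r hr).aestronglyMeasurable
  · refine Eventually.of_forall (fun θ hθ ρ hρ => hM (ρ, θ) ⟨hρ, ?_⟩)
    rw [uIoc_of_le (by positivity)] at hθ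
    exact Ioc_subset_Icc_self hθ
  · exact intervalIntegrable_const
  · exact Eventually.of_forall (fun θ _ ρ hρ => hd ρ (hsub hρ) θ)

/-- A decaying solution of Bessel's equation near infinity vanishes. -/
theorem eq_zero_of_bessel_of_decay {κ N a : ℝ} (hκ : 0 < κ) (ha : 0 ≤ a) {f g h : ℝ → ℝ}
    (hf : ∀ r, a < r → HasDerivAt f (g r) r) (hg : ∀ r, a < r → HasDerivAt g (h r) r)
    (hode : ∀ r, a < r → h r + g r / r + (κ ^ 2 - N / r ^ 2) * f r = 0)
    (hf0 : Tendsto (fun r => √r * f r) atTop (𝓝 0))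
    (hg0 : Tendsto (fun r => √r * g r) atTop (𝓝 0)) :
    ∀ r, a < r → f r = 0 := by
  let p : ℝ → ℝ := fun r => √r * f r
  let q : ℝ → ℝ := fun r => √r * g r + √r * f r / (2 * r)
  let M : ℝ := N - 1 / 4
  let C : ℝ := |M| / κ
  let E : ℝ → ℝ := fun r => q r ^ 2 + κ ^ 2 * p r ^ 2
  have hp : ∀ r, a < r → HasDerivAt p (q r) r := by
    intro r hr
    have hr0 : 0 < r := ha.trans_lt hr
    have hs : 0 < √r := Real.sqrt_pos.2 hr0
    refine ((Real.hasDerivAt_sqrt hr0.ne').mul (hf r hr)).congr_deriv ?_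
    simp only [q]
    have : √r * √r = r := Real.mul_self_sqrt hr0.le
    field_simp
    rw [Real.sq_sqrt hr0.le]
    ring
  have hq : ∀ r, a < r → HasDerivAt q ((-κ ^ 2 + M / r ^ 2) * p r) r := by
    intro r hr
    have hr0 : 0 < r := ha.trans_lt hr
    have hs : 0 < √r := Real.sqrt_pos.2 hr0
    have hh : h r = -(g r / r) - (κ ^ 2 - N / r ^ 2) * f r := by linarith [hode r hr]
    refine (((Real.hasDerivAt_sqrt hr0.ne').mul (hg r hr)).add
      ((hp r hr).div ((hasDerivAt_id r).const_mul 2) (by simpa using hr0.ne'))).congr_deriv ?_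
    simp only [q, p, M, hh, id]
    obtain ⟨s, hs', rfl⟩ : ∃ s, 0 < s ∧ r = s ^ 2 := ⟨√r, hs, (Real.sq_sqrt hr0.le).symm⟩
    rw [Real.sqrt_sq hs'.le]
    field_simp
    ring
  have hE : ∀ r, a < r → HasDerivAt E (2 * (M / r ^ 2) * p r * q r) r := by
    intro r hr
    refine (((hq r hr).pow 2).add (((hp r hr).pow 2).const_mul (κ ^ 2))).congr_deriv ?_
    simp
    ring
  have hEnn : ∀ r, 0 ≤ E r := fun r => by positivity
  let W : ℝ → ℝ := fun r => E r * Real.exp (-(C / r))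
  have hW : ∀ r, a < r → HasDerivAt W
      ((2 * (M / r ^ 2) * p r * q r + C / r ^ 2 * E r) * Real.exp (-(C / r))) r := by
    intro r hr
    have hr0 : 0 < r := ha.trans_lt hr
    have h1 : HasDerivAt (fun r : ℝ => -(C / r)) (C / r ^ 2) r := by
      refine (((hasDerivAt_inv hr0.ne').const_mul C).neg).congr_deriv ?_
      field_simp
    refine ((hE r hr).mul h1.exp).congr_deriv ?_
    ring
  have hWmono : MonotoneOn W (Ioi a) := by
    refine monotoneOn_of_deriv_nonneg (convex_Ioi a)
      (fun r hr => (hW r hr).continuousAt.continuousWithinAt)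
      (fun r hr => ?_) (fun r hr => ?_)
    · rw [interior_Ioi] at hr
      exact (hW r hr).differentiableAt.differentiableWithinAt
    · rw [interior_Ioi] at hr
      rw [(hW r hr).deriv]
      have hr0 : 0 < r := ha.trans_lt hr
      refine mul_nonneg ?_ (Real.exp_pos _).le
      have h1 : |M| * (2 * (p r * q r)) * κ + |M| * E r ≥ 0 := by
        have : 0 ≤ (q r + κ * p r) ^ 2 := sq_nonneg _
        have h2 : |M| * (2 * (p r * q r)) * κ + |M| * E r = |M| * (q r + κ * p r) ^ 2 := by
          simp only [E]; ring
        rw [h2]; positivity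
      have h1' : -(|M| * (2 * (p r * q r)) * κ) + |M| * E r ≥ 0 := by
        have h2 : -(|M| * (2 * (p r * q r)) * κ) + |M| * E r = |M| * (q r - κ * p r) ^ 2 := by
          simp only [E]; ring
        rw [h2]; positivity
      have h3 : 2 * (M / r ^ 2) * p r * q r + C / r ^ 2 * E r
          = (M * (2 * (p r * q r)) * κ + |M| * E r) / (κ * r ^ 2) := by
        simp only [C]
        field_simp
      rw [h3]
      refine div_nonneg ?_ (by positivity)
      rcases abs_choice M with hM | hM
      · rw [hM] at h1 ⊢; linarith
      · rw [hM] at h1' ⊢; linarith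
  have hElim : Tendsto E atTop (𝓝 0) := by
    have h1 : Tendsto (fun r : ℝ => (2 * r)⁻¹) atTop (𝓝 0) :=
      tendsto_inv_atTop_zero.comp (tendsto_id.const_mul_atTop (by norm_num))
    have h2 : Tendsto q atTop (𝓝 0) := by
      simpa [q, div_eq_mul_inv] using hg0.add (hf0.mul h1)
    simpa [E, p] using (h2.pow 2).add ((hf0.pow 2).const_mul (κ ^ 2))
  have hC : 0 ≤ C := by positivity
  have hWlim : Tendsto W atTop (𝓝 0) := by
    refine squeeze_zero' (Eventually.of_forall fun r => mul_nonneg (hEnn r) (Real.exp_pos _).le)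
      ?_ hElim
    filter_upwards [eventually_gt_atTop 0] with r hr
    refine mul_le_of_le_one_right (hEnn r) ?_
    rw [Real.exp_le_one_iff, neg_nonpos]
    positivity
  intro r hr
  have h1 : W r ≤ 0 := by
    refine ge_of_tendsto hWlim ?_
    filter_upwards [eventually_ge_atTop r] with x hx
    exact hWmono hr (lt_of_lt_of_le hr hx) hx
  have h2 : E r ≤ 0 := by
    by_contra! hpos
    exact absurd h1 (not_le.2 (mul_pos hpos (Real.exp_pos _)))
  have hr0 : 0 < r := ha.trans_lt hr
  have h3 : p r = 0 := by
    have h4 : κ ^ 2 * p r ^ 2 ≤ 0 := by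
      have : E r = q r ^ 2 + κ ^ 2 * p r ^ 2 := rfl
      nlinarith [sq_nonneg (q r)]
    have h5 : 0 < κ ^ 2 := by positivity
    have : p r ^ 2 ≤ 0 := by nlinarith
    exact pow_eq_zero_iff (two_ne_zero) |>.1 (le_antisymm this (sq_nonneg _))
  exact (mul_eq_zero.1 h3).resolve_left (Real.sqrt_pos.2 hr0).ne'

theorem summable_deriv_coeff {b : ℕ → ℝ} (hb : ∀ x : ℝ, Summable fun k => |b k| * x ^ k) (x : ℝ) :
    Summable fun k : ℕ => |(k + 1) * b (k + 1)| * x ^ k := by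
  have hmaj : Summable fun k : ℕ => |b (k + 1)| * (2 * max |x| 1) ^ (k + 1) :=
    (summable_nat_add_iff (f := fun k => |b k| * (2 * max |x| 1) ^ k) 1).2 (hb (2 * max |x| 1))
  refine Summable.of_norm_bounded hmaj (fun k => ?_)
  rw [norm_mul, norm_pow, Real.norm_eq_abs, Real.norm_eq_abs, abs_abs, abs_mul, mul_pow]
  have h1 : |(k : ℝ) + 1| ≤ 2 ^ (k + 1) := by
    rw [abs_of_nonneg (by positivity)]
    exact_mod_cast Nat.lt_two_pow_self.le
  have h2 : |x| ^ k ≤ max |x| 1 ^ (k + 1) :=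
    (pow_le_pow_left₀ (abs_nonneg x) (le_max_left _ _) k).trans
      (pow_le_pow_right₀ (le_max_right _ _) (Nat.le_succ k))
  calc |(k : ℝ) + 1| * |b (k + 1)| * |x| ^ k
      ≤ 2 ^ (k + 1) * |b (k + 1)| * max |x| 1 ^ (k + 1) := by gcongr
    _ = _ := by ring

/-- Termwise differentiation of an everywhere convergent power series. -/
theorem hasDerivAt_entire_tsum {b : ℕ → ℝ} (hb : ∀ x : ℝ, Summable fun k => |b k| * x ^ k) (s : ℝ) :
    HasDerivAt (fun s => ∑' k, b k * s ^ k) (∑' k : ℕ, (k + 1) * b (k + 1) * s ^ k) s := by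
  have hmaj : Summable fun k : ℕ => |b k| * (k * (|s| + 1) ^ (k - 1)) := by
    refine (summable_nat_add_iff 1).1 ((summable_deriv_coeff hb (|s| + 1)).congr (fun k => ?_))
    rw [abs_mul, abs_of_nonneg (by positivity : (0 : ℝ) ≤ k + 1)]
    push_cast
    ring
  have hsum : ∀ y : ℝ, Summable fun k => b k * y ^ k := fun y =>
    Summable.of_norm_bounded (hb |y|) (fun k => by simp)
  have hs : s ∈ Metric.ball (0 : ℝ) (|s| + 1) := by simp
  have h := hasDerivAt_tsum_of_isPreconnected (g := fun k y => b k * y ^ k)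
    (g' := fun k y => b k * (k * y ^ (k - 1))) hmaj Metric.isOpen_ball
    (convex_ball (0 : ℝ) (|s| + 1)).isPreconnected
    (fun k y _ => (hasDerivAt_pow k y).const_mul (b k)) (fun k y hy => ?_) hs (hsum s) hs
  · refine h.congr_deriv ?_
    have hsum' : Summable fun k : ℕ => b k * (k * s ^ (k - 1)) := by
      refine Summable.of_norm_bounded hmaj (fun k => ?_)
      rw [norm_mul, norm_mul, norm_pow, Real.norm_eq_abs, Real.norm_eq_abs, Real.norm_eq_abs,
        Nat.abs_cast]
      gcongr
      linarith
    rw [hsum'.tsum_eq_zero_add]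
    simp only [Nat.cast_zero, zero_mul, mul_zero, zero_add, Nat.cast_add, Nat.cast_one,
      Nat.add_sub_cancel]
    exact tsum_congr fun k => by ring
  · rw [norm_mul, norm_mul, norm_pow, Real.norm_eq_abs, Real.norm_eq_abs, Real.norm_eq_abs,
      Nat.abs_cast]
    gcongr
    simpa using (mem_ball_zero_iff.1 hy).le

/-- The Taylor coefficients of `s ↦ Γ(m + 1) (κ √s / 2) ^ (-m) J_m (κ √s)`. -/
def besselCoeff (κ : ℝ) (m k : ℕ) : ℝ :=
  (-(κ ^ 2 / 4)) ^ k * (m.factorial / (k.factorial * (m + k).factorial))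

/-- The entire function `s ↦ Γ(m + 1) (κ √s / 2) ^ (-m) J_m (κ √s)`. -/
def besselSeries (κ : ℝ) (m : ℕ) (s : ℝ) : ℝ := ∑' k, besselCoeff κ m k * s ^ k

lemma abs_besselCoeff_le (κ : ℝ) (m k : ℕ) :
    |besselCoeff κ m k| ≤ (κ ^ 2 / 4) ^ k / k.factorial := by
  rw [besselCoeff, abs_mul, abs_pow, abs_neg, abs_of_nonneg (by positivity : 0 ≤ κ ^ 2 / 4),
    abs_of_nonneg (by positivity), div_eq_mul_one_div ((κ ^ 2 / 4) ^ k)]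
  refine mul_le_mul_of_nonneg_left ?_ (by positivity)
  have h : (m.factorial : ℝ) ≤ (m + k).factorial := by
    exact_mod_cast Nat.factorial_le (Nat.le_add_right m k)
  rw [div_le_div_iff₀ (by positivity) (by positivity)]
  have : (0 : ℝ) < k.factorial := by positivity
  nlinarith

lemma summable_besselCoeff (κ : ℝ) (m : ℕ) (x : ℝ) :
    Summable fun k => |besselCoeff κ m k| * x ^ k := by
  refine Summable.of_norm_bounded (Real.summable_pow_div_factorial (κ ^ 2 / 4 * |x|)) (fun k => ?_)
  rw [norm_mul, norm_pow, Real.norm_eq_abs, Real.norm_eq_abs, abs_abs, mul_pow, mul_div_right_comm]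
  gcongr
  exact abs_besselCoeff_le κ m k

lemma besselCoeff_succ (κ : ℝ) (m k : ℕ) :
    (k + 1) * (k + 1 + m) * besselCoeff κ m (k + 1) = -(κ ^ 2 / 4) * besselCoeff κ m k := by
  have h1 : ((k + 1).factorial : ℝ) = (k + 1) * k.factorial := by
    exact_mod_cast Nat.factorial_succ k
  have h2 : ((m + (k + 1)).factorial : ℝ) = (m + k + 1) * (m + k).factorial := by
    exact_mod_cast Nat.factorial_succ (m + k)
  rw [besselCoeff, besselCoeff, h1, h2, pow_succ]
  field_simp
  ring

lemma abs_besselSeries_sub_one_le {κ : ℝ} (m : ℕ) {s : ℝ} (hs : 0 ≤ s) (hs1 : κ ^ 2 * s ≤ 1) :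
    |besselSeries κ m s - 1| ≤ 1 / 2 := by
  have hsum : Summable fun k => besselCoeff κ m k * s ^ k :=
    Summable.of_norm_bounded (summable_besselCoeff κ m |s|) (fun k => by simp)
  set x : ℝ := κ ^ 2 / 4 * s with hx
  have hx0 : 0 ≤ x := by positivity
  have hexp := Real.summable_pow_div_factorial x
  have h0 : besselCoeff κ m 0 = 1 := by
    simp only [besselCoeff, pow_zero, Nat.factorial_zero, Nat.cast_one, add_zero, one_mul]
    exact div_self (by positivity)
  have h1 : besselSeries κ m s - 1 = ∑' k, besselCoeff κ m (k + 1) * s ^ (k + 1) := by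
    rw [besselSeries, hsum.tsum_eq_zero_add, h0]
    simp
  have h2 : Real.exp x - 1 = ∑' k : ℕ, x ^ (k + 1) / (k + 1).factorial := by
    have h : Real.exp x = ∑' k : ℕ, x ^ k / k.factorial := by
      rw [Real.exp_eq_exp_ℝ]
      exact congrFun NormedSpace.exp_eq_tsum_div x
    rw [h, hexp.tsum_eq_zero_add]
    simp
  have h3 : |besselSeries κ m s - 1| ≤ Real.exp x - 1 := by
    rw [h1, h2, ← Real.norm_eq_abs]
    refine tsum_of_norm_bounded ((summable_nat_add_iff 1).2 hexp).hasSum (fun k => ?_)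
    rw [norm_mul, norm_pow, Real.norm_eq_abs, Real.norm_eq_abs, abs_of_nonneg hs, hx, mul_pow,
      mul_div_right_comm]
    gcongr
    exact abs_besselCoeff_le κ m _
  have h4 : x ≤ 1 / 4 := by rw [hx]; linarith
  have h5 := Real.abs_exp_sub_one_le (x := x) (by rw [abs_of_nonneg hx0]; linarith)
  rw [abs_of_nonneg hx0] at h5
  linarith [le_abs_self (Real.exp x - 1)]

/-- The functions `r ↦ r ^ m * besselSeries κ m (r ^ 2)` solve Bessel's equation. -/
theorem exists_besselSeries_deriv (κ : ℝ) (m : ℕ) : ∃ g h : ℝ → ℝ,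
    (∀ r, HasDerivAt (fun r => r ^ m * besselSeries κ m (r ^ 2)) (g r) r) ∧
    (∀ r, HasDerivAt g (h r) r) ∧
    ∀ r, 0 < r → h r + g r / r + (κ ^ 2 - m ^ 2 / r ^ 2) *
      (r ^ m * besselSeries κ m (r ^ 2)) = 0 := by
  let b := besselCoeff κ m
  let b1 : ℕ → ℝ := fun k => (k + 1) * b (k + 1)
  let b2 : ℕ → ℝ := fun k => (k + 1) * b1 (k + 1)
  have hb : ∀ x : ℝ, Summable fun k => |b k| * x ^ k := summable_besselCoeff κ m
  have hb1 : ∀ x : ℝ, Summable fun k => |b1 k| * x ^ k := summable_deriv_coeff hb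
  have hb2 : ∀ x : ℝ, Summable fun k => |b2 k| * x ^ k := summable_deriv_coeff hb1
  let φ : ℝ → ℝ := fun s => ∑' k, b k * s ^ k
  let φ1 : ℝ → ℝ := fun s => ∑' k, b1 k * s ^ k
  let φ2 : ℝ → ℝ := fun s => ∑' k, b2 k * s ^ k
  have hφ : ∀ s, HasDerivAt φ (φ1 s) s := hasDerivAt_entire_tsum hb
  have hφ1 : ∀ s, HasDerivAt φ1 (φ2 s) s := hasDerivAt_entire_tsum hb1
  have of_abs : ∀ {d : ℕ → ℝ}, (∀ x : ℝ, Summable fun k => |d k| * x ^ k) → ∀ x : ℝ,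
      Summable fun k => d k * x ^ k := fun hd x =>
    Summable.of_norm_bounded (hd |x|) (fun k => by simp)
  have hode : ∀ s, s * φ2 s + (m + 1) * φ1 s + κ ^ 2 / 4 * φ s = 0 := by
    intro s
    have h1 : s * φ2 s = ∑' k : ℕ, k * b1 k * s ^ k := by
      have hsm : Summable fun k : ℕ => k * b1 k * s ^ k := by
        refine (summable_nat_add_iff 1).1 (((of_abs hb2 s).mul_left s).congr (fun k => ?_))
        simp only [b2]; push_cast; ring
      rw [hsm.tsum_eq_zero_add, ← tsum_mul_left]
      simp only [Nat.cast_zero, zero_mul, zero_add]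
      refine tsum_congr (fun k => ?_)
      simp only [b2]; push_cast; ring
    have hsm : Summable fun k : ℕ => k * b1 k * s ^ k := by
      refine (summable_nat_add_iff 1).1 (((of_abs hb2 s).mul_left s).congr (fun k => ?_))
      simp only [b2]; push_cast; ring
    rw [h1, ← tsum_mul_left, ← tsum_mul_left, ← hsm.tsum_add ((of_abs hb1 s).mul_left _),
      ← (hsm.add ((of_abs hb1 s).mul_left _)).tsum_add ((of_abs hb s).mul_left _)]
    rw [← tsum_zero (α := ℝ) (β := ℕ)]
    refine tsum_congr (fun k => ?_)
    have := besselCoeff_succ κ m k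
    simp only [b1, b]
    linear_combination s ^ k * this
  have hsq : ∀ r : ℝ, HasDerivAt (fun r : ℝ => r ^ 2) (2 * r) r := fun r => by
    simpa using hasDerivAt_pow 2 r
  have hφr : ∀ r, HasDerivAt (fun r => φ (r ^ 2)) (φ1 (r ^ 2) * (2 * r)) r := fun r =>
    HasDerivAt.comp (h₂ := φ) (h := fun r : ℝ => r ^ 2) r (hφ (r ^ 2)) (hsq r)
  have hφ1r : ∀ r, HasDerivAt (fun r => φ1 (r ^ 2)) (φ2 (r ^ 2) * (2 * r)) r := fun r =>
    HasDerivAt.comp (h₂ := φ1) (h := fun r : ℝ => r ^ 2) r (hφ1 (r ^ 2)) (hsq r)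
  refine ⟨_, _, fun r => (hasDerivAt_pow m r).mul (hφr r), fun r =>
    (((hasDerivAt_pow (m - 1) r).const_mul (m : ℝ)).mul (hφr r)).add
      ((hasDerivAt_pow m r).mul ((hφ1r r).mul ((hasDerivAt_id r).const_mul 2))), ?_⟩
  intro r hr
  have h := hode (r ^ 2)
  have hbs : ∀ s, besselSeries κ m s = φ s := fun _ => rfl
  simp only [hbs]
  rcases m with _ | _ | m
  · simp at h ⊢
    field_simp
    linear_combination 4 * h
  · simp at h ⊢
    field_simp
    linear_combination 4 * r ^ 2 * h
  · simp at h ⊢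
    field_simp
    linear_combination 4 * r ^ (m + 4) * h

/-- `u` is a `C²` solution of the Helmholtz equation on `V`. -/
def HelmholtzOn (κ : ℝ) (V : Set R2) (u : R2 → ℂ) : Prop :=
  ContDiffOn ℝ 2 u V ∧ ∀ x ∈ V, laplacian2 u x + (κ : ℂ) ^ 2 * u x = 0

/-- The unit vector at angle `θ`. -/
def radialVec (θ : ℝ) : R2 :=
  Real.cos θ • EuclideanSpace.single 0 1 + Real.sin θ • EuclideanSpace.single 1 1

/-- The unit vector at angle `θ + π / 2`. -/
def tangentVec (θ : ℝ) : R2 :=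
  -Real.sin θ • EuclideanSpace.single 0 1 + Real.cos θ • EuclideanSpace.single 1 1

lemma hasDerivAt_radialVec (θ : ℝ) : HasDerivAt radialVec (tangentVec θ) θ :=
  ((Real.hasDerivAt_cos θ).smul_const _).add ((Real.hasDerivAt_sin θ).smul_const _)

lemma hasDerivAt_tangentVec (θ : ℝ) : HasDerivAt tangentVec (-radialVec θ) θ := by
  refine (((Real.hasDerivAt_sin θ).neg.smul_const _).add
    ((Real.hasDerivAt_cos θ).smul_const _)).congr_deriv ?_
  simp only [radialVec]
  module

lemma continuous_radialVec : Continuous radialVec :=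
  continuous_iff_continuousAt.2 fun θ => (hasDerivAt_radialVec θ).continuousAt

lemma continuous_tangentVec : Continuous tangentVec :=
  continuous_iff_continuousAt.2 fun θ => (hasDerivAt_tangentVec θ).continuousAt

lemma periodic_radialVec : Function.Periodic radialVec (2 * π) := fun θ => by
  simp [radialVec]

@[simp] lemma radialVec_apply_zero (θ : ℝ) : radialVec θ 0 = Real.cos θ := by
  simp [radialVec]

@[simp] lemma radialVec_apply_one (θ : ℝ) : radialVec θ 1 = Real.sin θ := by
  simp [radialVec]

@[simp] lemma norm_radialVec (θ : ℝ) : ‖radialVec θ‖ = 1 := by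
  simp [EuclideanSpace.norm_eq]

lemma norm_smul_radialVec {r : ℝ} (hr : 0 ≤ r) (θ : ℝ) : ‖r • radialVec θ‖ = r := by
  rw [norm_smul, norm_radialVec, mul_one, Real.norm_of_nonneg hr]

lemma exists_smul_radialVec (x : R2) : ∃ θ, x = ‖x‖ • radialVec θ := by
  refine ⟨Complex.arg (x 0 + x 1 * Complex.I), ?_⟩
  have h : ‖(x 0 + x 1 * Complex.I : ℂ)‖ = ‖x‖ := by
    rw [EuclideanSpace.norm_eq, Complex.norm_def, Complex.normSq_add_mul_I]
    simp
  ext i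
  fin_cases i
  · simp [← h, Complex.norm_mul_cos_arg]
  · simp [← h, Complex.norm_mul_sin_arg]

lemma ContDiffAt.differentiableAt_fderiv_of_two {u : R2 → ℂ} {x : R2} (hu : ContDiffAt ℝ 2 u x) :
    DifferentiableAt ℝ (fderiv ℝ u) x :=
  (hu.fderiv_right (m := 1) (by norm_num)).differentiableAt (by norm_num)

lemma laplacian2_eq_sum_fderiv_fderiv {u : R2 → ℂ} {x : R2} (hu : ContDiffAt ℝ 2 u x) :
    laplacian2 u x = ∑ i : Fin 2, fderiv ℝ (fderiv ℝ u) x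
      (EuclideanSpace.single i 1) (EuclideanSpace.single i 1) := by
  refine Finset.sum_congr rfl (fun i _ => ?_)
  have h := hu.differentiableAt_fderiv_of_two.hasFDerivAt.clm_apply
    (hasFDerivAt_const (EuclideanSpace.single i (1 : ℝ) : R2) x)
  rw [h.fderiv]
  simp

lemma laplacian2_eq_polar {u : R2 → ℂ} {x : R2} (hu : ContDiffAt ℝ 2 u x) (θ : ℝ) :
    laplacian2 u x = fderiv ℝ (fderiv ℝ u) x (radialVec θ) (radialVec θ) +
      fderiv ℝ (fderiv ℝ u) x (tangentVec θ) (tangentVec θ) := by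
  rw [laplacian2_eq_sum_fderiv_fderiv hu, Fin.sum_univ_two]
  simp only [radialVec, tangentVec, map_add, map_smul, add_apply, smul_apply, Complex.real_smul]
  have h : (Real.cos θ : ℂ) ^ 2 + (Real.sin θ : ℂ) ^ 2 = 1 := by
    exact_mod_cast Real.cos_sq_add_sin_sq θ
  push_cast at h ⊢
  linear_combination (-(fderiv ℝ (fderiv ℝ u) x (EuclideanSpace.single 0 1)
    (EuclideanSpace.single 0 1)) - (fderiv ℝ (fderiv ℝ u) x (EuclideanSpace.single 1 1)
    (EuclideanSpace.single 1 1))) * h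

/-- The (unnormalised) `n`-th Fourier coefficient of a `2π`-periodic function. -/
def fourierMode (w : ℝ → ℂ) (n : ℤ) : ℂ :=
  ∫ θ in (0 : ℝ)..2 * π, w θ * Complex.exp (-(n * θ * Complex.I))

lemma hasDerivAt_exp_mode (n : ℤ) (θ : ℝ) :
    HasDerivAt (fun θ : ℝ => Complex.exp (-(n * θ * Complex.I)))
      (-(n * Complex.I) * Complex.exp (-(n * θ * Complex.I))) θ := by
  have h1 : HasDerivAt (fun θ : ℝ => -((n : ℂ) * θ * Complex.I)) (-(n * Complex.I)) θ := by
    have := ((Complex.ofRealCLM.hasDerivAt (x := θ)).const_mul (n : ℂ)).mul_const Complex.I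
    simpa using! this.neg
  refine h1.cexp.congr_deriv ?_
  ring

lemma norm_exp_mode (n : ℤ) (θ : ℝ) : ‖Complex.exp (-(n * θ * Complex.I))‖ = 1 := by
  have : -((n : ℂ) * θ * Complex.I) = ((-(n * θ) : ℝ) : ℂ) * Complex.I := by push_cast; ring
  rw [this, Complex.norm_exp_ofReal_mul_I]

lemma continuous_exp_mode (n : ℤ) :
    Continuous fun θ : ℝ => Complex.exp (-(n * θ * Complex.I)) := by fun_prop

lemma norm_fourierMode_le {w : ℝ → ℂ} {M : ℝ} (hM : ∀ θ, ‖w θ‖ ≤ M) (n : ℤ) :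
    ‖fourierMode w n‖ ≤ 2 * π * M := by
  have h := intervalIntegral.norm_integral_le_of_norm_le_const (a := 0) (b := 2 * π)
    (f := fun θ : ℝ => w θ * Complex.exp (-(n * θ * Complex.I))) (C := M)
    (fun θ _ => by rw [norm_mul, norm_exp_mode, mul_one]; exact hM θ)
  rw [sub_zero, abs_of_nonneg (by positivity : 0 ≤ 2 * π)] at h
  rw [fourierMode]
  linarith

lemma fourierMode_linear_combination {w₁ w₂ w₃ w₄ : ℝ → ℂ} (h₁ : Continuous w₁)
    (h₂ : Continuous w₂) (h₃ : Continuous w₃) (h₄ : Continuous w₄) {α β γ : ℂ}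
    (h : ∀ θ, α * w₁ θ + β * w₂ θ + w₃ θ + γ * w₄ θ = 0) (n : ℤ) :
    α * fourierMode w₁ n + β * fourierMode w₂ n + fourierMode w₃ n + γ * fourierMode w₄ n = 0 := by
  have hE := continuous_exp_mode n
  simp only [fourierMode]
  rw [← intervalIntegral.integral_const_mul, ← intervalIntegral.integral_const_mul,
    ← intervalIntegral.integral_const_mul, ← intervalIntegral.integral_add,
    ← intervalIntegral.integral_add, ← intervalIntegral.integral_add,
    ← intervalIntegral.integral_zero (E := ℂ) (a := 0) (b := 2 * π) (μ := volume)]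
  · refine intervalIntegral.integral_congr (fun θ _ => ?_)
    linear_combination Complex.exp (-(n * θ * Complex.I)) * h θ
  all_goals exact Continuous.intervalIntegrable (by fun_prop) _ _

lemma fourierMode_second_deriv {w w₁ w₂ : ℝ → ℂ} (h₁ : ∀ θ, HasDerivAt w (w₁ θ) θ)
    (h₂ : ∀ θ, HasDerivAt w₁ (w₂ θ) θ) (hc : Continuous w₂) (hp : w (2 * π) = w 0)
    (hp₁ : w₁ (2 * π) = w₁ 0) (n : ℤ) :
    fourierMode w₂ n = -n ^ 2 * fourierMode w n := by
  have hw : Continuous w := continuous_iff_continuousAt.2 fun θ => (h₁ θ).continuousAt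
  have hE := continuous_exp_mode n
  have hd : ∀ θ : ℝ, HasDerivAt
      (fun θ : ℝ => (w₁ θ + n * Complex.I * w θ) * Complex.exp (-(n * θ * Complex.I)))
      (w₂ θ * Complex.exp (-(n * θ * Complex.I)) +
        n ^ 2 * (w θ * Complex.exp (-(n * θ * Complex.I)))) θ := by
    intro θ
    refine (((h₂ θ).add ((h₁ θ).const_mul (n * Complex.I))).mul
      (hasDerivAt_exp_mode n θ)).congr_deriv ?_
    simp only [Pi.add_apply]
    linear_combination (-(n ^ 2 * w θ * Complex.exp (-(n * θ * Complex.I)))) * Complex.I_sq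
  have hval := intervalIntegral.integral_eq_sub_of_hasDerivAt (a := 0) (b := 2 * π)
    (fun θ _ => hd θ) (Continuous.intervalIntegrable (by fun_prop) _ _)
  rw [intervalIntegral.integral_add (Continuous.intervalIntegrable (by fun_prop) _ _)
    (Continuous.intervalIntegrable (by fun_prop) _ _), intervalIntegral.integral_const_mul] at hval
  have hexp : Complex.exp (-(n * ((2 * π : ℝ) : ℂ) * Complex.I)) = 1 := by
    rw [Complex.exp_eq_one_iff]
    exact ⟨-n, by push_cast; ring⟩
  rw [hexp, hp, hp₁] at hval
  simp only [Complex.ofReal_zero, mul_zero, zero_mul, neg_zero, Complex.exp_zero, sub_self] at hval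
  simp only [fourierMode]
  linear_combination hval

/-- The Fourier modes of a Helmholtz solution on an annulus solve Bessel's equation. -/
theorem fourierMode_bessel {κ a b : ℝ} (ha : 0 ≤ a) {V : Set R2} (hV : IsOpen V) {u : R2 → ℂ}
    (hu : HelmholtzOn κ V u) {c : R2}
    (hc : ∀ r ∈ Ioo a b, ∀ θ, c + r • radialVec θ ∈ V) (n : ℤ) :
    ∃ H : ℝ → ℂ, ∀ r ∈ Ioo a b,
      HasDerivAt (fun r => fourierMode (fun θ => u (c + r • radialVec θ)) n)
        (fourierMode (fun θ => fderiv ℝ u (c + r • radialVec θ) (radialVec θ)) n) r ∧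
      HasDerivAt
        (fun r => fourierMode (fun θ => fderiv ℝ u (c + r • radialVec θ) (radialVec θ)) n)
        (H r) r ∧
      H r + fourierMode (fun θ => fderiv ℝ u (c + r • radialVec θ) (radialVec θ)) n / r +
        (κ ^ 2 - n ^ 2 / r ^ 2) * fourierMode (fun θ => u (c + r • radialVec θ)) n = 0 := by
  let P : ℝ × ℝ → R2 := fun q => c + q.1 • radialVec q.2
  have hrad := continuous_radialVec
  have htan := continuous_tangentVec
  have hP : Continuous P := by fun_prop
  have hPV : MapsTo P (Ioo a b ×ˢ univ) V := fun q hq => hc q.1 hq.1 q.2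
  have hDu : ContinuousOn (fderiv ℝ u) V := hu.1.continuousOn_fderiv_of_isOpen hV (by norm_num)
  have hDu1 : ContDiffOn ℝ 1 (fderiv ℝ u) V := hu.1.fderiv_of_isOpen hV (by norm_num)
  have hD2u : ContinuousOn (fderiv ℝ (fderiv ℝ u)) V :=
    hDu1.continuousOn_fderiv_of_isOpen hV (by norm_num)
  have hcd : ∀ x ∈ V, ContDiffAt ℝ 2 u x := fun x hx => hu.1.contDiffAt (hV.mem_nhds hx)
  have hE : ContinuousOn (fun q : ℝ × ℝ => Complex.exp (-(n * q.2 * Complex.I)))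
      (Ioo a b ×ˢ univ) := by fun_prop
  have hr2 : ContinuousOn (fun q : ℝ × ℝ => radialVec q.2) (Ioo a b ×ˢ univ) := by fun_prop
  have hc0 : ContinuousOn (fun q : ℝ × ℝ => u (P q) * Complex.exp (-(n * q.2 * Complex.I)))
      (Ioo a b ×ˢ univ) := (hu.1.continuousOn.comp hP.continuousOn hPV).mul hE
  have hc1 : ContinuousOn (fun q : ℝ × ℝ => fderiv ℝ u (P q) (radialVec q.2) *
      Complex.exp (-(n * q.2 * Complex.I))) (Ioo a b ×ˢ univ) :=
    ((hDu.comp hP.continuousOn hPV).clm_apply hr2).mul hE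
  have hc2 : ContinuousOn (fun q : ℝ × ℝ => fderiv ℝ (fderiv ℝ u) (P q) (radialVec q.2)
      (radialVec q.2) * Complex.exp (-(n * q.2 * Complex.I))) (Ioo a b ×ˢ univ) :=
    (((hD2u.comp hP.continuousOn hPV).clm_apply hr2).clm_apply hr2).mul hE
  have hray : ∀ r θ : ℝ, HasDerivAt (fun r : ℝ => c + r • radialVec θ) (radialVec θ) r := by
    intro r θ
    simpa using ((hasDerivAt_id r).smul_const (radialVec θ)).const_add c
  have hcirc : ∀ r θ : ℝ, HasDerivAt (fun θ : ℝ => c + r • radialVec θ) (r • tangentVec θ) θ :=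
    fun r θ => ((hasDerivAt_radialVec θ).const_smul r).const_add c
  refine ⟨fun r => fourierMode (fun θ => fderiv ℝ (fderiv ℝ u) (c + r • radialVec θ)
    (radialVec θ) (radialVec θ)) n, fun r hr => ⟨?_, ?_, ?_⟩⟩
  · refine hasDerivAt_integral_period
      (Φ := fun r θ => u (c + r • radialVec θ) * Complex.exp (-(n * θ * Complex.I)))
      (Φ' := fun r θ => fderiv ℝ u (c + r • radialVec θ) (radialVec θ) *
        Complex.exp (-(n * θ * Complex.I))) hc0 hc1 (fun r hr θ => ?_) hr
    have hx := hc r hr θ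
    exact ((((hcd _ hx).differentiableAt (by norm_num)).hasFDerivAt).comp_hasDerivAt r
      (hray r θ)).mul_const _
  · refine hasDerivAt_integral_period
      (Φ := fun r θ => fderiv ℝ u (c + r • radialVec θ) (radialVec θ) *
        Complex.exp (-(n * θ * Complex.I)))
      (Φ' := fun r θ => fderiv ℝ (fderiv ℝ u) (c + r • radialVec θ) (radialVec θ) (radialVec θ) *
        Complex.exp (-(n * θ * Complex.I))) hc1 hc2 (fun r hr θ => ?_) hr
    have hx := hc r hr θ
    have h := ((hcd _ hx).differentiableAt_fderiv_of_two.hasFDerivAt).comp_hasDerivAt r (hray r θ)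
    have h2 := h.clm_apply (hasDerivAt_const r (radialVec θ))
    refine (h2.mul_const _).congr_deriv ?_
    simp
  · have hr0 : 0 < r := ha.trans_lt hr.1
    have hPr : Continuous fun θ : ℝ => c + r • radialVec θ := by fun_prop
    have hDuθ : Continuous fun θ => fderiv ℝ u (c + r • radialVec θ) :=
      hDu.comp_continuous hPr (hc r hr)
    have hD2uθ : Continuous fun θ => fderiv ℝ (fderiv ℝ u) (c + r • radialVec θ) :=
      hD2u.comp_continuous hPr (hc r hr)
    let w₂ : ℝ → ℂ := fun θ => r ^ 2 * fderiv ℝ (fderiv ℝ u) (c + r • radialVec θ) (tangentVec θ)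
      (tangentVec θ) - r * fderiv ℝ u (c + r • radialVec θ) (radialVec θ)
    have hw₂ : Continuous w₂ :=
      (continuous_const.mul ((hD2uθ.clm_apply htan).clm_apply htan)).sub
        (continuous_const.mul (hDuθ.clm_apply hrad))
    have hmode := fourierMode_second_deriv (w := fun θ => u (c + r • radialVec θ))
      (w₁ := fun θ => r * fderiv ℝ u (c + r • radialVec θ) (tangentVec θ)) (w₂ := w₂)
      (fun θ => by
        have hx := hc r hr θ
        refine ((((hcd _ hx).differentiableAt (by norm_num)).hasFDerivAt).comp_hasDerivAt θ
          (hcirc r θ)).congr_deriv ?_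
        simp)
      (fun θ => by
        have hx := hc r hr θ
        have h := ((hcd _ hx).differentiableAt_fderiv_of_two.hasFDerivAt).comp_hasDerivAt θ
          (hcirc r θ)
        refine ((h.clm_apply (hasDerivAt_tangentVec θ)).const_mul (r : ℂ)).congr_deriv ?_
        simp [w₂]
        ring)
      hw₂ (by simp [radialVec]) (by simp [radialVec, tangentVec]) n
    have hzero : r ^ 2 * fourierMode (fun θ => fderiv ℝ (fderiv ℝ u) (c + r • radialVec θ)
        (radialVec θ) (radialVec θ)) n +
        r * fourierMode (fun θ => fderiv ℝ u (c + r • radialVec θ) (radialVec θ)) n +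
        fourierMode w₂ n + κ ^ 2 * r ^ 2 * fourierMode (fun θ => u (c + r • radialVec θ)) n
        = 0 := by
      refine fourierMode_linear_combination ((hD2uθ.clm_apply hrad).clm_apply hrad)
        (hDuθ.clm_apply hrad) hw₂ (hu.1.continuousOn.comp_continuous hPr (hc r hr)) (fun θ => ?_) n
      have hx := hc r hr θ
      have hh := hu.2 _ hx
      rw [laplacian2_eq_polar (hcd _ hx) θ] at hh
      simp only [w₂, Function.comp_apply]
      linear_combination r ^ 2 * hh
    rw [hmode] at hzero
    have hrc : (r : ℂ) ≠ 0 := by exact_mod_cast hr0.ne'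
    field_simp
    linear_combination hzero

/-- Near the singular point, a bounded solution of Bessel's equation with bounded derivative is a
multiple of the regular solution. -/
theorem eq_mul_besselSeries_of_bounded {κ R₀ M R : ℝ} {m : ℕ} (hκR : κ ^ 2 * R₀ ^ 2 ≤ 1)
    {F G H : ℝ → ℂ} (hF : ∀ r ∈ Ioo 0 R₀, HasDerivAt F (G r) r)
    (hG : ∀ r ∈ Ioo 0 R₀, HasDerivAt G (H r) r)
    (hode : ∀ r ∈ Ioo 0 R₀, H r + G r / r + ((κ : ℂ) ^ 2 - (m : ℂ) ^ 2 / (r : ℂ) ^ 2) * F r = 0)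
    (hFM : ∀ r ∈ Ioo 0 R₀, ‖F r‖ ≤ M) (hGM : ∀ r ∈ Ioo 0 R₀, ‖G r‖ ≤ M) (hR : R ∈ Ioo 0 R₀) :
    ∃ d : ℂ, ‖d‖ ≤ 2 * M / R ^ m ∧
      ∀ r ∈ Ioo 0 R₀, F r = d * ((r ^ m * besselSeries κ m (r ^ 2) : ℝ) : ℂ) := by
  obtain ⟨g, h, hj, hg, hjode⟩ := exists_besselSeries_deriv κ m
  set j : ℝ → ℝ := fun r => r ^ m * besselSeries κ m (r ^ 2) with hjdef
  have hjpos : ∀ r ∈ Ioo 0 R₀, r ^ m / 2 ≤ j r ∧ 0 < j r := by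
    intro r hr
    have h1 : κ ^ 2 * r ^ 2 ≤ 1 :=
      (mul_le_mul_of_nonneg_left (pow_le_pow_left₀ hr.1.le hr.2.le 2) (sq_nonneg κ)).trans hκR
    have h2 := abs_le.1 (abs_besselSeries_sub_one_le m (sq_nonneg r) h1)
    have h3 : 0 < r ^ m := pow_pos hr.1 m
    have h4 : r ^ m / 2 ≤ j r := by
      simp only [hjdef]
      nlinarith [h2.1]
    exact ⟨h4, lt_of_lt_of_le (by positivity) h4⟩
  have hjc : ∀ r ∈ Ioo 0 R₀, (j r : ℂ) ≠ 0 := fun r hr => by exact_mod_cast (hjpos r hr).2.ne'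
  set W : ℝ → ℂ := fun r => (r : ℂ) * (F r * (g r : ℂ) - G r * (j r : ℂ)) with hW
  have hWd : ∀ r ∈ Ioo 0 R₀, HasDerivAt W 0 r := by
    intro r hr
    have hr0 : (r : ℂ) ≠ 0 := by exact_mod_cast hr.1.ne'
    have hd := (hasDerivAt_id r).ofReal_comp.mul
      (((hF r hr).mul (hg r).ofReal_comp).sub ((hG r hr).mul (hj r).ofReal_comp))
    refine hd.congr_deriv ?_
    have e1 := hode r hr
    have e2 : (h r : ℂ) + g r / r + ((κ : ℂ) ^ 2 - (m : ℂ) ^ 2 / (r : ℂ) ^ 2) * j r = 0 := by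
      exact_mod_cast congrArg (fun t : ℝ => (t : ℂ)) (hjode r hr.1)
    have e3 : (r : ℂ) * (g r / r) = g r := by field_simp
    have e4 : (r : ℂ) * (G r / r) = G r := by field_simp
    simp only [id, Complex.ofReal_one, Pi.sub_apply, Pi.mul_apply]
    linear_combination (r : ℂ) * F r * e2 - r * j r * e1 - F r * e3 + j r * e4
  have hWc : ∀ r ∈ Ioo 0 R₀, W r = W R := fun r hr =>
    isOpen_Ioo.is_const_of_deriv_eq_zero isPreconnected_Ioo
      (fun r hr => (hWd r hr).differentiableAt.differentiableWithinAt)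
      (fun r hr => (hWd r hr).deriv) hr hR
  have hlim : Tendsto (fun r : ℝ => r * (M * |g r| + M * |j r|)) (𝓝[>] 0) (𝓝 0) := by
    have hcont : ContinuousAt (fun r : ℝ => r * (M * |g r| + M * |j r|)) 0 := by
      have := (hg 0).continuousAt
      have := (hj 0).continuousAt
      fun_prop
    have := hcont.tendsto.mono_left (nhdsWithin_le_nhds (s := Ioi 0))
    simpa using this
  have hWR : W R = 0 := by
    rw [← norm_le_zero_iff]
    refine ge_of_tendsto hlim ?_
    filter_upwards [Ioo_mem_nhdsGT (hR.1.trans hR.2)] with r hr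
    rw [← hWc r hr, hW]
    simp only [norm_mul, Complex.norm_real, Real.norm_of_nonneg hr.1.le]
    refine mul_le_mul_of_nonneg_left ((norm_sub_le _ _).trans ?_) hr.1.le
    rw [norm_mul, norm_mul, Complex.norm_real, Complex.norm_real]
    exact add_le_add (mul_le_mul_of_nonneg_right (hFM r hr) (norm_nonneg _))
      (mul_le_mul_of_nonneg_right (hGM r hr) (norm_nonneg _))
  have hqd : ∀ r ∈ Ioo 0 R₀, HasDerivAt (fun r => F r / (j r : ℂ)) 0 r := by
    intro r hr
    refine ((hF r hr).div (hj r).ofReal_comp (hjc r hr)).congr_deriv ?_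
    have hr0 : (r : ℂ) ≠ 0 := by exact_mod_cast hr.1.ne'
    have e := (hWc r hr).trans hWR
    simp only [hW, mul_eq_zero, hr0, false_or] at e
    rw [div_eq_zero_iff]
    left
    linear_combination -e
  refine ⟨F R / j R, ?_, fun r hr => ?_⟩
  · rw [norm_div, Complex.norm_real, Real.norm_of_nonneg (hjpos R hR).2.le]
    have hp : 0 < R ^ m := pow_pos hR.1 m
    have hM : 0 ≤ M := (norm_nonneg _).trans (hFM R hR)
    rw [div_le_div_iff₀ (hjpos R hR).2 hp]
    nlinarith [mul_le_mul_of_nonneg_right (hFM R hR) hp.le,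
      mul_le_mul_of_nonneg_left (hjpos R hR).1 hM]
  · have := isOpen_Ioo.is_const_of_deriv_eq_zero isPreconnected_Ioo
      (fun r hr => (hqd r hr).differentiableAt.differentiableWithinAt)
      (fun r hr => (hqd r hr).deriv) hr hR
    rw [← this]
    exact (div_mul_cancel₀ _ (hjc r hr)).symm

/-- The Fourier–Bessel expansion of a solution of the Helmholtz equation in a small disc. -/
theorem HelmholtzOn.exists_fourier_bessel {κ : ℝ} {V : Set R2} (hV : IsOpen V) {u : R2 → ℂ}
    (hu : HelmholtzOn κ V u) {c : R2} (hc : c ∈ V) :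
    ∃ R C : ℝ, 0 < R ∧ 0 ≤ C ∧ ∃ d : ℤ → ℂ, (∀ n, ‖d n‖ ≤ C / R ^ n.natAbs) ∧
      ∀ r ∈ Ioo 0 R, ∀ θ : ℝ, HasSum (fun n : ℤ => d n *
        ((r ^ n.natAbs * besselSeries κ n.natAbs (r ^ 2) : ℝ) : ℂ) * Complex.exp (n * θ * Complex.I))
        (u (c + r • radialVec θ)) := by
  obtain ⟨ρ, hρ, hρV⟩ := Metric.isOpen_iff.1 hV c hc
  obtain ⟨R₀, hR₀, hR₀ρ, hκR⟩ : ∃ R₀ : ℝ, 0 < R₀ ∧ R₀ < ρ ∧ κ ^ 2 * R₀ ^ 2 ≤ 1 := by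
    have h1 : ContinuousAt (fun r : ℝ => κ ^ 2 * r ^ 2) 0 := by fun_prop
    have h2 : ∀ᶠ r in 𝓝[>] (0 : ℝ), κ ^ 2 * r ^ 2 < 1 :=
      (h1.eventually_lt continuousAt_const (by simp)).filter_mono nhdsWithin_le_nhds
    obtain ⟨r, h3, h4⟩ := (h2.and (Ioo_mem_nhdsGT hρ)).exists
    exact ⟨r, h4.1, h4.2, h3.le⟩
  have hball : Metric.closedBall c R₀ ⊆ V := (Metric.closedBall_subset_ball hR₀ρ).trans hρV
  have hmem : ∀ r ∈ Ioo 0 R₀, ∀ θ, c + r • radialVec θ ∈ Metric.closedBall c R₀ := by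
    intro r hr θ
    rw [Metric.mem_closedBall, dist_eq_norm, add_sub_cancel_left, norm_smul_radialVec hr.1.le]
    exact hr.2.le
  have hcpt := isCompact_closedBall c R₀
  obtain ⟨M₁, hM₁⟩ := hcpt.exists_bound_of_continuousOn (hu.1.continuousOn.mono hball)
  obtain ⟨M₂, hM₂⟩ := hcpt.exists_bound_of_continuousOn
    ((hu.1.continuousOn_fderiv_of_isOpen hV (by norm_num)).mono hball)
  set M := max M₁ M₂
  have hM0 : 0 ≤ M := (norm_nonneg _).trans
    ((hM₁ c (Metric.mem_closedBall_self hR₀.le)).trans (le_max_left _ _))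
  have hR : R₀ / 2 ∈ Ioo 0 R₀ := ⟨by positivity, by linarith⟩
  have key : ∀ n : ℤ, ∃ d : ℂ, ‖d‖ ≤ 2 * (2 * π * M) / (R₀ / 2) ^ n.natAbs ∧ ∀ r ∈ Ioo 0 R₀,
      fourierMode (fun θ => u (c + r • radialVec θ)) n =
        d * ((r ^ n.natAbs * besselSeries κ n.natAbs (r ^ 2) : ℝ) : ℂ) := by
    intro n
    obtain ⟨H, hH⟩ := fourierMode_bessel le_rfl hV hu (c := c) (b := R₀)
      (fun r hr θ => hball (hmem r hr θ)) n
    have hn : ((n.natAbs : ℂ)) ^ 2 = (n : ℂ) ^ 2 := by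
      have h := congrArg (fun t : ℤ => (t : ℂ)) (Int.natAbs_sq n)
      simpa only [Int.cast_pow, Int.cast_natCast] using h
    refine eq_mul_besselSeries_of_bounded (M := 2 * π * M) hκR (fun r hr => (hH r hr).1)
      (fun r hr => (hH r hr).2.1) (fun r hr => ?_) (fun r hr => ?_) (fun r hr => ?_) hR
    · rw [hn]; exact (hH r hr).2.2
    · exact norm_fourierMode_le (fun θ => (hM₁ _ (hmem r hr θ)).trans (le_max_left _ _)) n
    · refine norm_fourierMode_le (fun θ => ?_) n
      refine ((fderiv ℝ u (c + r • radialVec θ)).le_opNorm _).trans ?_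
      rw [norm_radialVec, mul_one]
      exact (hM₂ _ (hmem r hr θ)).trans (le_max_right _ _)
  choose d hd hdF using key
  refine ⟨R₀ / 2, ‖(1 / (2 * π) : ℂ)‖ * (2 * (2 * π * M)), hR.1, by positivity,
    fun n => 1 / (2 * π) * d n, fun n => ?_, fun r hr θ => ?_⟩
  · rw [norm_mul, mul_div_assoc]
    exact mul_le_mul_of_nonneg_left (hd n) (norm_nonneg _)
  · have hr' : r ∈ Ioo 0 R₀ := ⟨hr.1, hr.2.trans hR.2⟩
    have hcont : Continuous fun θ => u (c + r • radialVec θ) :=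
      hu.1.continuousOn.comp_continuous
        (continuous_const.add (continuous_radialVec.const_smul r))
        (fun θ => hball (hmem r hr' θ))
    have hper : Function.Periodic (fun θ => u (c + r • radialVec θ)) (2 * π) := fun θ => by
      simp only [periodic_radialVec θ]
    have hgeo : Summable fun n : ℤ => (r / (R₀ / 2)) ^ n.natAbs := by
      have h1 : Summable fun n : ℕ => (r / (R₀ / 2)) ^ n :=
        summable_geometric_of_lt_one (div_nonneg hr.1.le hR.1.le) ((div_lt_one hR.1).2 hr.2)
      refine Summable.of_nat_of_neg ?_ ?_ <;> simpa using h1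
    have hsum : Summable fun n : ℤ => fourierMode (fun θ => u (c + r • radialVec θ)) n := by
      refine Summable.of_norm_bounded (hgeo.mul_left (2 * (2 * π * M) * 2)) (fun n => ?_)
      have h1 : κ ^ 2 * r ^ 2 ≤ 1 :=
        (mul_le_mul_of_nonneg_left (pow_le_pow_left₀ hr'.1.le hr'.2.le 2) (sq_nonneg κ)).trans hκR
      have h2 := abs_le.1 (abs_besselSeries_sub_one_le n.natAbs (sq_nonneg r) h1)
      have h3 : |besselSeries κ n.natAbs (r ^ 2)| ≤ 2 := abs_le.2 ⟨by linarith, by linarith⟩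
      rw [hdF n r hr', norm_mul, Complex.norm_real, Real.norm_eq_abs, abs_mul,
        abs_of_nonneg (pow_nonneg hr.1.le _), div_pow]
      calc ‖d n‖ * (r ^ n.natAbs * |besselSeries κ n.natAbs (r ^ 2)|)
          ≤ 2 * (2 * π * M) / (R₀ / 2) ^ n.natAbs * (r ^ n.natAbs * 2) := by
            have hrn : 0 ≤ r ^ n.natAbs := pow_nonneg hr.1.le _
            exact mul_le_mul (hd n) (mul_le_mul_of_nonneg_left h3 hrn) (by positivity)
              (div_nonneg (by positivity) (pow_nonneg hR.1.le _))
        _ = _ := by ring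
    convert hasSum_fourier_of_periodic hcont hper hsum θ using 2 with n
    rw [mul_assoc (1 / (2 * π : ℂ)), ← hdF n r hr', fourierMode]

lemma tsum_besselCoeff_mul (κ : ℝ) (m : ℕ) (a w : ℂ) (s : ℝ) :
    ∑' k, a * besselCoeff κ m k * w * (s : ℂ) ^ k = a * w * besselSeries κ m s := by
  rw [besselSeries, Complex.ofReal_tsum, ← tsum_mul_left]
  refine tsum_congr fun k => ?_
  push_cast
  ring

lemma norm_mul_besselCoeff_le {κ R C : ℝ} (hR : 0 < R) (hC : 0 ≤ C) {d : ℂ} {n : ℕ}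
    (hd : ‖d‖ ≤ C / R ^ n) (m k : ℕ) :
    ‖d * besselCoeff κ m k‖ ≤ C * (1 / R + κ ^ 2 / 4) ^ n * (1 / R + κ ^ 2 / 4) ^ k := by
  rw [norm_mul, Complex.norm_real, Real.norm_eq_abs]
  have hR' : 0 < 1 / R := by positivity
  have h1 : |besselCoeff κ m k| ≤ (1 / R + κ ^ 2 / 4) ^ k := by
    refine (abs_besselCoeff_le κ m k).trans ((div_le_self (by positivity) ?_).trans ?_)
    · exact_mod_cast k.factorial_pos
    · exact pow_le_pow_left₀ (by positivity) (by linarith) k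
  have h2 : ‖d‖ ≤ C * (1 / R + κ ^ 2 / 4) ^ n := by
    refine hd.trans ?_
    rw [div_eq_mul_one_div, ← one_div_pow]
    gcongr
    linarith [sq_nonneg κ]
  gcongr

lemma AnalyticAt.comp_pair {S : ℂ × ℂ → ℂ} (hS : AnalyticAt ℂ S 0) {f g : R2 → ℂ} {x : R2}
    (hf : AnalyticAt ℝ f x) (hg : AnalyticAt ℝ g x) (hf0 : f x = 0) (hg0 : g x = 0) :
    AnalyticAt ℝ (fun y => S (f y, g y)) x := by
  have h : AnalyticAt ℝ S (f x, g x) := by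
    rw [hf0, hg0]
    exact hS.restrictScalars
  exact AnalyticAt.comp h (hf.prod hg)

lemma exists_analytic_polar (c : R2) : ∃ z zc : R2 → ℂ, AnalyticAt ℝ z c ∧ AnalyticAt ℝ zc c ∧
    z c = 0 ∧ zc c = 0 ∧ ∀ r θ : ℝ, z (c + r • radialVec θ) = r * Complex.exp (θ * Complex.I) ∧
      zc (c + r • radialVec θ) = r * Complex.exp (-(θ * Complex.I)) := by
  have hL : AnalyticAt ℝ (fun x : R2 => Complex.orthonormalBasisOneI.repr.symm (x - c)) c :=
    (Complex.orthonormalBasisOneI.repr.symm.toContinuousLinearEquiv.toContinuousLinearMap.analyticAt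
      _).comp (analyticAt_id.sub analyticAt_const)
  have hp : ∀ r θ : ℝ, Complex.orthonormalBasisOneI.repr.symm (c + r • radialVec θ - c) =
      r * Complex.exp (θ * Complex.I) := by
    intro r θ
    rw [add_sub_cancel_left, Complex.orthonormalBasisOneI_repr_symm_apply, Complex.exp_mul_I]
    simp
    ring
  refine ⟨_, _, hL, (Complex.conjCLE.toContinuousLinearMap.analyticAt _).comp hL, by simp, by simp,
    fun r θ => ⟨hp r θ, ?_⟩⟩
  simp only [Function.comp, hp]
  simp [← Complex.exp_conj]

lemma HasSum.eq_tsum_add_tsum_neg {f : ℤ → ℂ} {a : ℂ} (hf : HasSum f a) :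
    a = (∑' n : ℕ, f n) + ∑' n : ℕ, f (-((n : ℤ) + 1)) := by
  have hinj : Function.Injective (fun n : ℕ => (-((n : ℤ) + 1))) := fun a b h => by
    simp only at h
    omega
  rw [← hf.tsum_eq]
  exact tsum_of_nat_of_neg_add_one (hf.summable.comp_injective Nat.cast_injective)
    (hf.summable.comp_injective hinj)

/-- Solutions of the Helmholtz equation are real-analytic. -/
theorem HelmholtzOn.analyticAt {κ : ℝ} {V : Set R2} (hV : IsOpen V) {u : R2 → ℂ}
    (hu : HelmholtzOn κ V u) {c : R2} (hc : c ∈ V) : AnalyticAt ℝ u c := by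
  obtain ⟨R, C, hR, hC, d, hd, hsum⟩ := hu.exists_fourier_bessel hV hc
  have hA0 : 0 < 1 / R + κ ^ 2 / 4 := by positivity
  obtain ⟨z, zc, hzan, hzcan, hz0, hzc0, hzp⟩ := exists_analytic_polar c
  set c₁ : ℕ → ℕ → ℂ := fun n k => d n * besselCoeff κ n k with hc₁
  set c₂ : ℕ → ℕ → ℂ := fun n k => d (-(n + 1)) * besselCoeff κ (n + 1) k with hc₂
  have hS₁ := analyticAt_doublePowerSeries (c := c₁) (C := C) hA0 (fun n k =>
    norm_mul_besselCoeff_le hR hC (by simpa using hd n) n k)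
  have hS₂ := analyticAt_doublePowerSeries (c := c₂) (C := C / R) hA0 (fun n k =>
    norm_mul_besselCoeff_le hR (by positivity) (by
      have := hd (-(n + 1))
      rw [Int.natAbs_neg, show ((n : ℤ) + 1).natAbs = n + 1 by omega] at this
      rwa [div_div, ← pow_succ']) (n + 1) k)
  have han : AnalyticAt ℝ (fun x => (∑' n, ∑' k, c₁ n k * z x ^ n * (z x * zc x) ^ k) +
      zc x * ∑' n, ∑' k, c₂ n k * zc x ^ n * (z x * zc x) ^ k) c := by
    refine AnalyticAt.add ?_ (hzcan.mul ?_)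
    · exact hS₁.comp_pair hzan (hzan.mul hzcan) hz0 (by simp [hz0])
    · exact hS₂.comp_pair hzcan (hzan.mul hzcan) hzc0 (by simp [hz0])
  refine han.congr ?_
  have hcu : ContinuousAt u c := hu.1.continuousOn.continuousAt (hV.mem_nhds hc)
  rw [← han.continuousAt.eventuallyEq_nhds_iff_eventuallyEq_nhdsNE hcu]
  have hball : Metric.ball c R ∈ 𝓝[≠] c := nhdsWithin_le_nhds (Metric.ball_mem_nhds c hR)
  filter_upwards [hball, self_mem_nhdsWithin] with x hx hxc
  obtain ⟨θ, hθ⟩ := exists_smul_radialVec (x - c)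
  set r := ‖x - c‖ with hr
  have hrR : r ∈ Ioo 0 R := ⟨norm_pos_iff.2 (sub_ne_zero.2 hxc), by simpa [dist_eq_norm] using hx⟩
  have hxr : x = c + r • radialVec θ := by rw [← hθ]; abel
  obtain ⟨hzx, hzcx⟩ := hzp r θ
  rw [← hxr] at hzx hzcx
  have hs : z x * zc x = ((r ^ 2 : ℝ) : ℂ) := by
    rw [hzx, hzcx, mul_mul_mul_comm, ← Complex.exp_add]
    simp [sq]
  have hu' := hsum r hrR θ
  rw [← hxr] at hu'
  have hpos : ∀ n : ℕ, ∑' k, c₁ n k * z x ^ n * (z x * zc x) ^ k = d n *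
      ((r ^ (n : ℤ).natAbs * besselSeries κ (n : ℤ).natAbs (r ^ 2) : ℝ) : ℂ) *
      Complex.exp ((n : ℤ) * θ * Complex.I) := by
    intro n
    simp only [hc₁]
    rw [hs, tsum_besselCoeff_mul, hzx, mul_pow, ← Complex.exp_nat_mul, Int.natAbs_natCast,
      Int.cast_natCast, mul_assoc (n : ℂ), Complex.ofReal_mul, Complex.ofReal_pow]
    ring
  have hneg : ∀ n : ℕ, zc x * ∑' k, c₂ n k * zc x ^ n * (z x * zc x) ^ k = d (-(n + 1)) *
      ((r ^ (-((n : ℤ) + 1)).natAbs * besselSeries κ (-((n : ℤ) + 1)).natAbs (r ^ 2) : ℝ) : ℂ) *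
      Complex.exp ((-((n : ℤ) + 1) : ℤ) * θ * Complex.I) := by
    intro n
    have h1 : (-((n : ℤ) + 1)).natAbs = n + 1 := by omega
    have h2 : ((-((n : ℤ) + 1) : ℤ) : ℂ) * θ * Complex.I =
        ((n + 1 : ℕ) : ℂ) * (-(θ * Complex.I)) := by push_cast; ring
    simp only [hc₂]
    rw [hs, tsum_besselCoeff_mul, hzcx, h1, h2, Complex.exp_nat_mul, Complex.ofReal_mul,
      Complex.ofReal_pow, mul_pow]
    ring
  rw [hu'.eq_tsum_add_tsum_neg, ← tsum_mul_left, tsum_congr hpos, tsum_congr hneg]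

lemma tendsto_sqrt_mul_fourierMode {w : ℝ → ℝ → ℂ}
    (h : ∀ ε > 0, ∃ R, ∀ r, R ≤ r → ∀ θ, √r * ‖w r θ‖ < ε) (n : ℤ) :
    Tendsto (fun r : ℝ => ((√r : ℝ) : ℂ) * fourierMode (w r) n) atTop (𝓝 0) := by
  rw [Metric.tendsto_atTop]
  intro ε hε
  have hπ := Real.pi_pos
  obtain ⟨R, hR⟩ := h (ε / (4 * π)) (by positivity)
  refine ⟨max R 1, fun r hr => ?_⟩
  have hr0 : 0 < √r := Real.sqrt_pos.2 (lt_of_lt_of_le one_pos ((le_max_right _ _).trans hr))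
  have hb := norm_fourierMode_le (w := w r) (M := ε / (4 * π) / √r) (fun θ => by
    rw [le_div_iff₀ hr0, mul_comm]
    exact (hR r ((le_max_left _ _).trans hr) θ).le) n
  rw [dist_zero_right, norm_mul, Complex.norm_real, Real.norm_of_nonneg hr0.le]
  calc √r * ‖fourierMode (w r) n‖ ≤ √r * (2 * π * (ε / (4 * π) / √r)) := by gcongr
    _ = ε / 2 := by field_simp; ring
    _ < ε := by linarith

/-- A form of Rellich's lemma: a solution of the Helmholtz equation in the exterior of a disc which,
together with its radial derivative, is `o(|x|^(-1/2))` at infinity, vanishes. -/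
theorem HelmholtzOn.eq_zero_of_decay {κ a : ℝ} (hκ : 0 < κ) (ha : 0 ≤ a) {u : R2 → ℂ}
    (hu : HelmholtzOn κ {x | a < ‖x‖} u)
    (h₀ : ∀ ε > 0, ∃ R, ∀ x : R2, a < ‖x‖ → R ≤ ‖x‖ → √‖x‖ * ‖u x‖ < ε)
    (h₁ : ∀ ε > 0, ∃ R, ∀ x : R2, a < ‖x‖ → R ≤ ‖x‖ →
      √‖x‖ * ‖fderiv ℝ u x (‖x‖⁻¹ • x)‖ < ε) {x : R2} (hx : a < ‖x‖) : u x = 0 := by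
  have hV : IsOpen {x : R2 | a < ‖x‖} := isOpen_lt continuous_const continuous_norm
  have hmem : ∀ r, a < r → ∀ θ, (0 : R2) + r • radialVec θ ∈ {x : R2 | a < ‖x‖} := by
    intro r hr θ
    rw [mem_ofPred_eq]
    rwa [zero_add, norm_smul_radialVec (ha.trans hr.le)]
  have hmode : ∀ n : ℤ, ∀ r, a < r →
      fourierMode (fun θ => u ((0 : R2) + r • radialVec θ)) n = 0 := by
    intro n
    set F : ℝ → ℂ := fun r => fourierMode (fun θ => u ((0 : R2) + r • radialVec θ)) n with hF
    set G : ℝ → ℂ := fun r => fourierMode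
      (fun θ => fderiv ℝ u ((0 : R2) + r • radialVec θ) (radialVec θ)) n with hG
    have key : ∀ r, a < r → HasDerivAt F (G r) r ∧ HasDerivAt G (deriv G r) r ∧
        deriv G r + G r / r + ((κ : ℂ) ^ 2 - (n : ℂ) ^ 2 / (r : ℂ) ^ 2) * F r = 0 := by
      intro r hr
      obtain ⟨H, hH⟩ := fourierMode_bessel ha hV hu (c := 0) (b := r + 1)
        (fun s hs θ => hmem s hs.1 θ) n
      obtain ⟨e1, e2, e3⟩ := hH r ⟨hr, by linarith⟩
      have e4 : deriv G r = H r := e2.deriv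
      exact ⟨e1, e4 ▸ e2, e4 ▸ e3⟩
    have hFlim : Tendsto (fun r : ℝ => ((√r : ℝ) : ℂ) * F r) atTop (𝓝 0) := by
      refine tendsto_sqrt_mul_fourierMode (fun ε hε => ?_) n
      obtain ⟨R, hR⟩ := h₀ ε hε
      refine ⟨max R (a + 1), fun r hr θ => ?_⟩
      have har : a < r := by linarith [(le_max_right R (a + 1)).trans hr]
      have hn : ‖(0 : R2) + r • radialVec θ‖ = r := by
        rw [zero_add, norm_smul_radialVec (ha.trans har.le)]
      simpa only [hn] using hR ((0 : R2) + r • radialVec θ) (by rwa [hn])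
        (by rw [hn]; exact (le_max_left _ _).trans hr)
    have hGlim : Tendsto (fun r : ℝ => ((√r : ℝ) : ℂ) * G r) atTop (𝓝 0) := by
      refine tendsto_sqrt_mul_fourierMode (fun ε hε => ?_) n
      obtain ⟨R, hR⟩ := h₁ ε hε
      refine ⟨max R (a + 1), fun r hr θ => ?_⟩
      have har : a < r := by linarith [(le_max_right R (a + 1)).trans hr]
      have hn : ‖(0 : R2) + r • radialVec θ‖ = r := by
        rw [zero_add, norm_smul_radialVec (ha.trans har.le)]
      have hv : r⁻¹ • ((0 : R2) + r • radialVec θ) = radialVec θ := by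
        rw [zero_add, inv_smul_smul₀ (ha.trans_lt har).ne']
      simpa only [hn, hv] using hR ((0 : R2) + r • radialVec θ) (by rwa [hn])
        (by rw [hn]; exact (le_max_left _ _).trans hr)
    have hpart : ∀ L : ℂ →L[ℝ] ℝ, ∀ r, a < r → L (F r) = 0 := by
      intro L
      have hlim : ∀ {Φ : ℝ → ℂ}, Tendsto (fun r : ℝ => ((√r : ℝ) : ℂ) * Φ r) atTop (𝓝 0) →
          Tendsto (fun r : ℝ => √r * L (Φ r)) atTop (𝓝 0) := by
        intro Φ hΦ
        have := (L.continuous.tendsto 0).comp hΦ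
        simpa only [Function.comp_def, ← Complex.real_smul, map_smul, map_zero, smul_eq_mul]
          using this
      refine eq_zero_of_bessel_of_decay (N := (n : ℝ) ^ 2) (g := fun r => L (G r))
        (h := fun r => L (deriv G r)) hκ ha (fun r hr => L.hasFDerivAt.comp_hasDerivAt r (key r hr).1)
        (fun r hr => L.hasFDerivAt.comp_hasDerivAt r (key r hr).2.1) (fun r hr => ?_)
        (hlim hFlim) (hlim hGlim)
      have e := congrArg L (key r hr).2.2
      have e1 : G r / r = r⁻¹ • G r := by
        rw [Complex.real_smul]; push_cast; ring
      have e2 : ((κ : ℂ) ^ 2 - (n : ℂ) ^ 2 / (r : ℂ) ^ 2) * F r =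
          (κ ^ 2 - (n : ℝ) ^ 2 / r ^ 2) • F r := by
        rw [Complex.real_smul]; push_cast; ring
      rw [e1, e2, map_add, map_add, map_smul, map_smul, map_zero, smul_eq_mul, smul_eq_mul] at e
      rw [div_eq_inv_mul]
      exact e
    exact fun r hr => Complex.ext (hpart Complex.reCLM r hr) (hpart Complex.imCLM r hr)
  obtain ⟨θ, hθ⟩ := exists_smul_radialVec x
  have hcont : Continuous fun θ => u ((0 : R2) + ‖x‖ • radialVec θ) :=
    hu.1.continuousOn.comp_continuous
      (continuous_const.add (continuous_radialVec.const_smul ‖x‖)) (hmem ‖x‖ hx)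
  have hper : Function.Periodic (fun θ => u ((0 : R2) + ‖x‖ • radialVec θ)) (2 * π) := fun θ => by
    simp only [periodic_radialVec θ]
  have hm := fun n => hmode n ‖x‖ hx
  simp only [fourierMode] at hm
  have hs := hasSum_fourier_of_periodic hcont hper (by simpa only [hm] using summable_zero) θ
  simp only [hm, mul_zero, zero_mul] at hs
  have := hs.unique hasSum_zero
  rwa [zero_add, ← hθ] at this

lemma HelmholtzOn.clm_comp {κ : ℝ} {V : Set R2} (hV : IsOpen V) {u : R2 → ℂ}
    (hu : HelmholtzOn κ V u) (L : ℂ →L[ℝ] ℂ) : HelmholtzOn κ V (fun x => L (u x)) := by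
  have hd : ∀ y ∈ V, fderiv ℝ (fun x => L (u x)) y = L.comp (fderiv ℝ u y) := fun y hy =>
    (L.hasFDerivAt.comp y ((hu.1.contDiffAt (hV.mem_nhds hy)).differentiableAt
      (by norm_num)).hasFDerivAt).fderiv
  refine ⟨L.contDiff.comp_contDiffOn hu.1, fun x hx => ?_⟩
  have hlap : laplacian2 (fun x => L (u x)) x = L (laplacian2 u x) := by
    rw [laplacian2, laplacian2, map_sum]
    refine Finset.sum_congr rfl fun i _ => ?_
    have hev : (fun y => fderiv ℝ (fun x => L (u x)) y (EuclideanSpace.single i 1)) =ᶠ[𝓝 x]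
        fun y => L (fderiv ℝ u y (EuclideanSpace.single i 1)) := by
      filter_upwards [hV.mem_nhds hx] with y hy
      rw [hd y hy]
      rfl
    have hdiff : DifferentiableAt ℝ (fun y => fderiv ℝ u y (EuclideanSpace.single i 1)) x :=
      (hu.1.contDiffAt (hV.mem_nhds hx)).differentiableAt_fderiv_of_two.clm_apply
        (differentiableAt_const _)
    rw [hev.fderiv_eq]
    exact congrArg (fun T : R2 →L[ℝ] ℂ => T (EuclideanSpace.single i 1))
      (L.hasFDerivAt.comp x hdiff.hasFDerivAt).fderiv
  have h : (κ : ℂ) ^ 2 * L (u x) = L ((κ : ℂ) ^ 2 * u x) := by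
    rw [← Complex.ofReal_pow, ← Complex.real_smul, ← Complex.real_smul, map_smul]
  rw [hlap, h, ← map_add, hu.2 x hx, map_zero]

lemma HelmholtzOn.sub {κ : ℝ} {V : Set R2} (hV : IsOpen V) {u v : R2 → ℂ}
    (hu : HelmholtzOn κ V u) (hv : HelmholtzOn κ V v) : HelmholtzOn κ V (u - v) := by
  refine ⟨hu.1.sub hv.1, fun x hx => ?_⟩
  have hux := hu.1.contDiffAt (hV.mem_nhds hx)
  have hvx := hv.1.contDiffAt (hV.mem_nhds hx)
  have hev : fderiv ℝ (u - v) =ᶠ[𝓝 x] fderiv ℝ u - fderiv ℝ v := by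
    filter_upwards [hV.mem_nhds hx] with y hy
    exact fderiv_sub ((hu.1.contDiffAt (hV.mem_nhds hy)).differentiableAt (by norm_num))
      ((hv.1.contDiffAt (hV.mem_nhds hy)).differentiableAt (by norm_num))
  have hlap : laplacian2 (u - v) x = laplacian2 u x - laplacian2 v x := by
    rw [laplacian2_eq_sum_fderiv_fderiv (u := u - v) (hux.sub hvx), laplacian2_eq_sum_fderiv_fderiv hux,
      laplacian2_eq_sum_fderiv_fderiv hvx, hev.fderiv_eq,
      fderiv_sub hux.differentiableAt_fderiv_of_two hvx.differentiableAt_fderiv_of_two,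
      ← Finset.sum_sub_distrib]
    rfl
  rw [hlap, Pi.sub_apply]
  linear_combination hu.2 x hx - hv.2 x hx

/-- Unique continuation for the Helmholtz equation. -/
theorem HelmholtzOn.eqOn_zero {κ : ℝ} {V W : Set R2} (hV : IsOpen V) (hVc : IsPreconnected V)
    {u : R2 → ℂ} (hu : HelmholtzOn κ V u) (hW : IsOpen W) (hWV : (W ∩ V).Nonempty)
    (h0 : ∀ x ∈ W, u x = 0) {x : R2} (hx : x ∈ V) : u x = 0 := by
  obtain ⟨y, hyW, hyV⟩ := hWV
  have han : AnalyticOnNhd ℝ u V := fun z hz => hu.analyticAt hV hz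
  refine han.eqOn_zero_of_preconnected_of_eventuallyEq_zero hVc hyV ?_ hx
  filter_upwards [hW.mem_nhds hyW] with z hz using h0 z hz

/-- A Helmholtz solution near the closure of `D` which vanishes on a relatively open part of the
analytic boundary of `D` vanishes on `D` if `κ` is not a Dirichlet eigenvalue. -/
theorem HelmholtzOn.eq_zero_of_frontier {κ : ℝ} {U D V : Set R2} (hU : IsOpen U)
    (hΓ : IsRealAnalyticClosedCurve (frontier D)) (hDU : closure D ⊆ U)
    (hκD : NotDirichletEigenvalue κ D) (hV : IsOpen V) (hne : (V ∩ frontier D).Nonempty)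
    {v : R2 → ℂ} (hv : HelmholtzOn κ U v) (h0 : ∀ x ∈ V ∩ frontier D, v x = 0) :
    ∀ x ∈ D, v x = 0 := by
  obtain ⟨γ, hγ, -, -, -, hγΓ⟩ := hΓ
  have hmem : ∀ t, γ t ∈ frontier D := fun t => hγΓ ▸ mem_range_self t
  have han : AnalyticOnNhd ℝ (v ∘ γ) univ := fun t _ =>
    (hv.analyticAt hU (hDU (frontier_subset_closure (hmem t)))).comp (hγ t)
  obtain ⟨x, hxV, hxΓ⟩ := hne
  obtain ⟨t, rfl⟩ : x ∈ range γ := hγΓ ▸ hxΓ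
  have hev : v ∘ γ =ᶠ[𝓝 t] 0 := by
    filter_upwards [(hγ t).continuousAt.preimage_mem_nhds (hV.mem_nhds hxV)] with s hs
    exact h0 _ ⟨hs, hmem s⟩
  have hzero := han.eqOn_zero_of_preconnected_of_eventuallyEq_zero isPreconnected_univ
    (mem_univ t) hev
  refine hκD v (hv.1.continuousOn.mono hDU) (hv.1.mono (subset_closure.trans hDU))
    (fun x hx => hv.2 x (hDU (subset_closure hx))) (fun x hx => ?_)
  obtain ⟨s, rfl⟩ : x ∈ range γ := hγΓ ▸ hx
  exact hzero (mem_univ s)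

/-- A real-valued radiation solution vanishes near infinity. -/
theorem HelmholtzOn.eq_zero_of_real_radiation {κ a : ℝ} (hκ : 0 < κ) (ha : 0 ≤ a) {u : R2 → ℂ}
    (hu : HelmholtzOn κ {x | a < ‖x‖} u) (him : ∀ x : R2, a < ‖x‖ → (u x).im = 0)
    (hrad : ∀ ε > 0, ∃ R, ∀ x : R2, a < ‖x‖ → R ≤ ‖x‖ →
      √‖x‖ * ‖fderiv ℝ u x (‖x‖⁻¹ • x) - Complex.I * κ * u x‖ < ε) {x : R2} (hx : a < ‖x‖) :
    u x = 0 := by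
  have hV : IsOpen {x : R2 | a < ‖x‖} := isOpen_lt continuous_const continuous_norm
  have hdim : ∀ x : R2, a < ‖x‖ → ∀ w, (fderiv ℝ u x w).im = 0 := by
    intro x hx w
    have hd := ((hu.1.contDiffAt (hV.mem_nhds hx)).differentiableAt (by norm_num)).hasFDerivAt
    have h1 := Complex.imCLM.hasFDerivAt.comp x hd
    have h2 : (Complex.imCLM ∘ u) =ᶠ[𝓝 x] fun _ => 0 := by
      filter_upwards [hV.mem_nhds hx] with y hy using him y hy
    have h3 := (h1.congr_of_eventuallyEq h2.symm).unique (hasFDerivAt_const (0 : ℝ) x)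
    exact congrArg (fun T : R2 →L[ℝ] ℝ => T w) h3
  have hre : ∀ x : R2, a < ‖x‖ →
      ‖fderiv ℝ u x (‖x‖⁻¹ • x)‖ ≤ ‖fderiv ℝ u x (‖x‖⁻¹ • x) - Complex.I * κ * u x‖ ∧
      κ * ‖u x‖ ≤ ‖fderiv ℝ u x (‖x‖⁻¹ • x) - Complex.I * κ * u x‖ := by
    intro x hx
    have h1 := him x hx
    have h2 := hdim x hx (‖x‖⁻¹ • x)
    set A := fderiv ℝ u x (‖x‖⁻¹ • x)
    have hA : A = (A.re : ℂ) := Complex.ext rfl (by simpa using h2)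
    have hu : u x = ((u x).re : ℂ) := Complex.ext rfl (by simpa using h1)
    constructor
    · have := Complex.abs_re_le_norm (A - Complex.I * κ * u x)
      rw [hA, Complex.norm_real]
      rw [hA, hu] at this
      rw [hu]
      simpa using this
    · have := Complex.abs_im_le_norm (A - Complex.I * κ * u x)
      rw [hu, Complex.norm_real]
      rw [hA, hu] at this
      rw [hA]
      simpa [abs_mul, abs_of_pos hκ] using this
  refine hu.eq_zero_of_decay hκ ha (fun ε hε => ?_) (fun ε hε => ?_) hx
  · obtain ⟨R, hR⟩ := hrad (κ * ε) (by positivity)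
    refine ⟨R, fun x hx hxR => lt_of_mul_lt_mul_left ?_ hκ.le⟩
    calc κ * (√‖x‖ * ‖u x‖) = √‖x‖ * (κ * ‖u x‖) := by ring
      _ ≤ _ := mul_le_mul_of_nonneg_left (hre x hx).2 (Real.sqrt_nonneg _)
      _ < κ * ε := hR x hx hxR
  · obtain ⟨R, hR⟩ := hrad ε hε
    exact ⟨R, fun x hx hxR =>
      (mul_le_mul_of_nonneg_left (hre x hx).1 (Real.sqrt_nonneg _)).trans_lt (hR x hx hxR)⟩

theorem im_on_analytic_curve_determines_radiation_solution
    (κ : ℝ) (hκ : 0 < κ)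
    (U : Set R2) (hUopen : IsOpen U) (hUconn : IsConnected U) (hKcpt : IsCompact Uᶜ)
    (D : Set R2) (hDopen : IsOpen D) (hDbdd : Bornology.IsBounded D) (hDconn : IsConnected D)
    (Γ : Set R2) (hΓ : Γ = frontier D)
    (hΓconn : IsConnected Γ) (hΓan : IsRealAnalyticClosedCurve Γ)
    (hDU : closure D ⊆ U)
    (hκD : NotDirichletEigenvalue κ D)
    (Λ : Set R2) (hΛne : Λ.Nonempty) (hΛΓ : Λ ⊆ Γ)
    (hΛopen : ∃ V : Set R2, IsOpen V ∧ Λ = V ∩ Γ)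
    (ψ₁ ψ₂ : R2 → ℂ)
    (h₁ : IsRadiationSolution κ U ψ₁) (h₂ : IsRadiationSolution κ U ψ₂)
    (him : ∀ x ∈ Λ, (ψ₁ x).im = (ψ₂ x).im) :
    ∀ x ∈ U, ψ₁ x = ψ₂ x := by
  have hH₁ : HelmholtzOn κ U ψ₁ := ⟨h₁.1, h₁.2.1⟩
  have hH₂ : HelmholtzOn κ U ψ₂ := ⟨h₂.1, h₂.2.1⟩
  have hφ : HelmholtzOn κ U (ψ₁ - ψ₂) := hH₁.sub hUopen hH₂
  have hv := hφ.clm_comp hUopen (Complex.ofRealCLM.comp Complex.imCLM)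
  obtain ⟨V, hV, rfl⟩ := hΛopen
  subst hΓ
  have hvD := hv.eq_zero_of_frontier hUopen hΓan hDU hκD hV hΛne (fun x hx => by
    simp [him x hx])
  obtain ⟨y, hy⟩ := hDconn.nonempty
  have hvU : ∀ x ∈ U, ((ψ₁ - ψ₂) x).im = 0 := fun x hx => by
    have := hv.eqOn_zero hUopen hUconn.isPreconnected hDopen
      ⟨y, hy, hDU (subset_closure hy)⟩ hvD hx
    exact Complex.ofReal_eq_zero.1 this
  obtain ⟨a₀, ha₀⟩ := hKcpt.isBounded.subset_closedBall (0 : R2)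
  set a := max a₀ 0
  have hext : {x : R2 | a < ‖x‖} ⊆ U := by
    intro x hx
    by_contra hxU
    have h1 := ha₀ hxU
    rw [mem_closedBall_zero_iff] at h1
    exact absurd (h1.trans (le_max_left _ _)) (not_le.2 hx)
  have hfar : ∀ x ∈ {x : R2 | a < ‖x‖}, (ψ₁ - ψ₂) x = 0 := by
    intro x hx
    refine HelmholtzOn.eq_zero_of_real_radiation hκ (le_max_right a₀ 0)
      ⟨hφ.1.mono hext, fun x hx => hφ.2 x (hext hx)⟩ (fun x hx => hvU x (hext hx))
      (fun ε hε => ?_) hx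
    obtain ⟨R₁, -, hR₁⟩ := h₁.2.2 (ε / 2) (by positivity)
    obtain ⟨R₂, -, hR₂⟩ := h₂.2.2 (ε / 2) (by positivity)
    refine ⟨max R₁ R₂, fun x hx hxR => ?_⟩
    have hxU := hext hx
    have e₁ := hR₁ x hxU ((le_max_left _ _).trans hxR)
    have e₂ := hR₂ x hxU ((le_max_right _ _).trans hxR)
    rw [norm_mul, Complex.norm_real, Real.norm_of_nonneg (Real.sqrt_nonneg _)] at e₁ e₂
    have hd := fderiv_sub
      ((h₁.1.contDiffAt (hUopen.mem_nhds hxU)).differentiableAt (by norm_num))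
      ((h₂.1.contDiffAt (hUopen.mem_nhds hxU)).differentiableAt (by norm_num))
    have hsplit : fderiv ℝ (ψ₁ - ψ₂) x (‖x‖⁻¹ • x) - Complex.I * κ * (ψ₁ - ψ₂) x =
        (fderiv ℝ ψ₁ x (‖x‖⁻¹ • x) - Complex.I * κ * ψ₁ x) -
        (fderiv ℝ ψ₂ x (‖x‖⁻¹ • x) - Complex.I * κ * ψ₂ x) := by
      rw [hd, sub_apply, Pi.sub_apply]
      ring
    rw [hsplit]
    refine (mul_le_mul_of_nonneg_left (norm_sub_le _ _) (Real.sqrt_nonneg _)).trans_lt ?_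
    rw [mul_add]
    linarith
  have hfne : ({x : R2 | a < ‖x‖} ∩ U).Nonempty := by
    obtain ⟨x, hx⟩ := NormedSpace.exists_lt_norm ℝ R2 a
    exact ⟨x, hx, hext hx⟩
  intro x hx
  exact sub_eq_zero.1 (hφ.eqOn_zero hUopen hUconn.isPreconnected
    (isOpen_lt continuous_const continuous_norm) hfne hfar hx)
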